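/- arXiv:2207.09552 — 2 statements merged into one kernel-verified Lean document; each statement's English description precedes it below -/
import Mathlib

section
/- For every convex body K in ℝ², the smallest possible density of a non-separable lattice of translates of K satisfies d_{2,1}(K) ≤ π√3/8. -/
open MeasureTheory Set Matrix Pointwise

noncomputable section

/-- The lattice `A · ℤⁿ` associated with an (invertible) matrix `A`. -/
def latticeOf {n : ℕ} (A : Matrix (Fin n) (Fin n) ℝ) : Set (Fin n → ℝ) :=
  Set.range fun m : Fin n → ℤ => A.mulVec fun i => (m i : ℝ)

/-- `Λ + K` is non-separable: every affine hyperplane `{y | ⟨u,y⟩ = c}` (with `u ≠ 0`)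
meets `x + K` for some `x ∈ Λ`. -/
def NonSeparable {n : ℕ} (Λ K : Set (Fin n → ℝ)) : Prop :=
  ∀ u : Fin n → ℝ, u ≠ 0 → ∀ c : ℝ, ∃ x ∈ Λ, ∃ y ∈ K, u ⬝ᵥ (x + y) = c

/-- `d_{n,n-1}(K)`: the smallest density `|K|/d(Λ)` of a non-separable
lattice of translates of `K`. -/
def dTrans {n : ℕ} (K : Set (Fin n → ℝ)) : ℝ :=
  sInf {d : ℝ | ∃ A : Matrix (Fin n) (Fin n) ℝ, A.det ≠ 0 ∧
    NonSeparable (latticeOf A) K ∧ d = (volume K).toReal / |A.det|}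

/-- A pair of vectors `(v, w)` (coordinates) whose dual lattice is admissible for `C`. -/
def AdmPair (C : Set (ℝ × ℝ)) (v w : ℝ × ℝ) : Prop :=
  ∀ s t : ℝ, ∀ m n : ℤ, (m ≠ 0 ∨ n ≠ 0) →
    s * v.1 + t * v.2 = m → s * w.1 + t * w.2 = n →
    ∃ p ∈ C, 1 / 2 ≤ |s * p.1 + t * p.2|

lemma half_le_of_int {m : ℤ} (hm : m ≠ 0) {x : ℝ} (h : 2 * x = m) : 1 / 2 ≤ |x| := by
  have h1 : (1 : ℝ) ≤ |(m : ℝ)| := by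
    have := Int.one_le_abs hm
    exact_mod_cast this
  rw [← h, abs_mul, abs_two] at h1
  linarith

/-- The parallelogram case. -/
lemma adm_par (C : Set (ℝ × ℝ)) (a b : ℝ × ℝ) (ha : a ∈ C) (hb : b ∈ C) :
    AdmPair C (2 * a.1, 2 * a.2) (2 * b.1, 2 * b.2) := by
  intro s t m n hmn h1 h2
  simp only at h1 h2
  rcases hmn with h | h
  · exact ⟨a, ha, half_le_of_int h (by linarith)⟩
  · exact ⟨b, hb, half_le_of_int h (by linarith)⟩

/-- The combinatorial heart of admissibility in the hexagon case. -/
lemma half_le_of_ints {m n k : ℤ} (h : (n < m ∧ k < m) ∨ (m < n ∧ m < k)) {θ x : ℝ}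
    (h0 : 0 ≤ θ) (h1 : θ ≤ 1) (hx : 2 * x = m - (θ * n + (1 - θ) * k)) : 1 / 2 ≤ |x| := by
  rcases h with ⟨h2, h3⟩ | ⟨h2, h3⟩
  · have e2 : (n : ℝ) + 1 ≤ m := by exact_mod_cast h2
    have e3 : (k : ℝ) + 1 ≤ m := by exact_mod_cast h3
    refine le_trans ?_ (le_abs_self _)
    nlinarith
  · have e2 : (m : ℝ) + 1 ≤ n := by exact_mod_cast h2
    have e3 : (m : ℝ) + 1 ≤ k := by exact_mod_cast h3
    refine le_trans ?_ (neg_le_abs _)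
    nlinarith

lemma schur {x y z : ℝ} (hx : 0 < x) (hy : 0 < y) (hz : 0 < z) :
    (x + y + z) * (4 * x * y - (x + y - z) ^ 2) ≤ 9 * x * y * z := by
  have key : ∀ x y z : ℝ, 0 < x → 0 < y → 0 < z → x ≤ y → y ≤ z →
      (x + y + z) * (4 * x * y - (x + y - z) ^ 2) ≤ 9 * x * y * z := by
    intro x y z hx hy hz h1 h2
    nlinarith [mul_nonneg (sub_nonneg.2 h1) (sub_nonneg.2 h2), 
      mul_nonneg hx.le (mul_nonneg (sub_nonneg.2 h1) (sub_nonneg.2 (h1.trans h2))),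
      mul_nonneg (add_nonneg (sub_nonneg.2 h1) hz.le) (sq_nonneg (y - z)),
      mul_nonneg (add_nonneg (sub_nonneg.2 h2) hx.le) (sq_nonneg (y - z)),
      mul_nonneg (sub_nonneg.2 h2) (mul_nonneg (sub_nonneg.2 h1) (sub_nonneg.2 h2))]
  rcases le_total x y with h1 | h1 <;> rcases le_total y z with h2 | h2 <;>
    rcases le_total x z with h3 | h3
  · linarith [key x y z hx hy hz h1 h2]
  · linarith [key x y z hx hy hz h1 h2]
  · linarith [key x z y hx hz hy h3 h2]
  · linarith [key z x y hz hx hy h3 h1]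
  · linarith [key y x z hy hx hz h1 h3]
  · linarith [key y z x hy hz hx h2 h3]
  · linarith [key z y x hz hy hx h2 h1]
  · linarith [key z y x hz hy hx h2 h1]

lemma adm_hex (C : Set (ℝ × ℝ)) (a b c : ℝ × ℝ) (ha : a ∈ C) (hb : b ∈ C) (hc : c ∈ C)
    (x y z : ℝ) (hx : 0 < x) (hy : 0 < y) (hz : 0 < z)
    (hxy : z < x + y) (hyz : x < y + z) (hzx : y < z + x)
    (r1 : x * a.1 + y * b.1 + z * c.1 = 0) (r2 : x * a.2 + y * b.2 + z * c.2 = 0)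
    (hd : |a.1 * b.2 - a.2 * b.1| = z) :
    ∃ v w : ℝ × ℝ, AdmPair C v w ∧ 16 / 9 * (x + y + z) ≤ |v.1 * w.2 - v.2 * w.1| := by
  set N := 4 * x * y - (x + y - z) ^ 2 with hN
  have hNpos : 0 < N := by nlinarith
  have hs := schur hx hy hz
  rw [← hN] at hs
  set θ := (x + y - z) / (2 * x) with hθ
  set φ := (x + y - z) / (2 * y) with hφ
  set D := N / (16 * x * y) with hD
  have hDpos : 0 < D := by positivity
  have hDe : D = (1 - θ * φ) / 4 := by
    rw [hD, hθ, hφ, hN]; field_simp; ring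
  have hθ0 : 0 ≤ θ := by rw [hθ]; apply div_nonneg <;> linarith
  have hφ0 : 0 ≤ φ := by rw [hφ]; apply div_nonneg <;> linarith
  have hθ1 : θ ≤ 1 := by rw [hθ, div_le_one (by linarith)]; linarith
  have hφ1 : φ ≤ 1 := by rw [hφ, div_le_one (by linarith)]; linarith
  refine ⟨((a.1 + θ * b.1) / (2 * D), (a.2 + θ * b.2) / (2 * D)),
    ((b.1 + φ * a.1) / (2 * D), (b.2 + φ * a.2) / (2 * D)), ?_, ?_⟩
  · intro s t m n hmn h1 h2
    simp only at h1 h2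
    set X := s * a.1 + t * a.2 with hX
    set Y := s * b.1 + t * b.2 with hY
    set Z := s * c.1 + t * c.2 with hZ
    have h1' : X + θ * Y = 2 * D * m := by
      rw [← h1, hX, hY]; field_simp; ring
    have h2' : Y + φ * X = 2 * D * n := by
      rw [← h2, hX, hY]; field_simp; ring
    have hXe : 2 * X = m - θ * n := by
      have : D * (2 * X) = D * (m - θ * n) := by
        have e : 4 * D = 1 - θ * φ := by linarith
        linear_combination (1/2) * h1' - θ/2 * h2' + X / 2 * e
      exact mul_left_cancel₀ hDpos.ne' this
    have hYe : 2 * Y = n - φ * m := by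
      have : D * (2 * Y) = D * (n - φ * m) := by
        have e : 4 * D = 1 - θ * φ := by linarith
        linear_combination (1/2) * h2' - φ/2 * h1' + Y / 2 * e
      exact mul_left_cancel₀ hDpos.ne' this
    have hR : x * X + y * Y + z * Z = 0 := by
      rw [hX, hY, hZ]; linear_combination s * r1 + t * r2
    set ψ := (x + z - y) / (2 * z) with hψ
    have hψ0 : 0 ≤ ψ := by rw [hψ]; apply div_nonneg <;> linarith
    have hψ1 : ψ ≤ 1 := by rw [hψ, div_le_one (by linarith)]; linarith
    have t1 : 2 * x * θ = x + y - z := by rw [hθ]; field_simp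
    have t2 : 2 * y * φ = x + y - z := by rw [hφ]; field_simp
    have t3 : 2 * z * ψ = x + z - y := by rw [hψ]; field_simp
    have hZe : 2 * Z = 0 - (ψ * m + (1 - ψ) * n) := by
      have : z * (2 * Z) = z * (0 - (ψ * m + (1 - ψ) * n)) := by
        linear_combination 2 * hR - x * hXe - y * hYe + n / 2 * t1 + m / 2 * t2 + (m - n) / 2 * t3
      exact mul_left_cancel₀ hz.ne' this
    have hcases : ((n < m ∧ 0 < m) ∨ (m < n ∧ m < 0)) ∨ ((m < n ∧ 0 < n) ∨ (n < m ∧ n < 0)) ∨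
        ((m < 0 ∧ n < 0) ∨ (0 < m ∧ 0 < n)) := by omega
    rcases hcases with h | h | h
    · exact ⟨a, ha, half_le_of_ints h hθ0 hθ1 (by push_cast; linarith)⟩
    · exact ⟨b, hb, half_le_of_ints h hφ0 hφ1 (by push_cast; linarith)⟩
    · exact ⟨c, hc, half_le_of_ints h hψ0 hψ1 (by push_cast; linarith)⟩
  · have e : (a.1 + θ * b.1) / (2 * D) * ((b.2 + φ * a.2) / (2 * D)) -
        (a.2 + θ * b.2) / (2 * D) * ((b.1 + φ * a.1) / (2 * D)) =
        (a.1 * b.2 - a.2 * b.1) / D := by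
      have e : 1 - θ * φ = 4 * D := by linarith
      field_simp
      linear_combination (a.1 * b.2 - a.2 * b.1) * e
    simp only
    rw [e, abs_div, hd, abs_of_pos hDpos, hD, div_div_eq_mul_div, le_div_iff₀ hNpos]
    nlinarith

lemma exists_adm (C : Set (ℝ × ℝ)) (hC : ∀ p ∈ C, -p ∈ C) (a b c : ℝ × ℝ)
    (ha : a ∈ C) (hb : b ∈ C) (hc : c ∈ C) :
    ∃ v w : ℝ × ℝ, AdmPair C v w ∧
      16 / 9 * (|b.1 * c.2 - b.2 * c.1| + |c.1 * a.2 - c.2 * a.1| + |a.1 * b.2 - a.2 * b.1|)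
        ≤ |v.1 * w.2 - v.2 * w.1| := by
  obtain ⟨x, hx⟩ : ∃ x, x = b.1 * c.2 - b.2 * c.1 := ⟨_, rfl⟩
  obtain ⟨y, hy⟩ : ∃ y, y = c.1 * a.2 - c.2 * a.1 := ⟨_, rfl⟩
  obtain ⟨z, hz⟩ : ∃ z, z = a.1 * b.2 - a.2 * b.1 := ⟨_, rfl⟩
  rw [← hx, ← hy, ← hz]
  have hx0 := abs_nonneg x
  have hy0 := abs_nonneg y
  have hz0 := abs_nonneg z
  by_cases h1 : |x| + |y| ≤ |z|
  · refine ⟨_, _, adm_par C a b ha hb, ?_⟩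
    have : 2 * a.1 * (2 * b.2) - 2 * a.2 * (2 * b.1) = 4 * z := by rw [hz]; ring
    simp only
    rw [this, abs_mul, abs_of_pos (by norm_num : (0:ℝ) < 4)]
    linarith
  by_cases h2 : |y| + |z| ≤ |x|
  · refine ⟨_, _, adm_par C b c hb hc, ?_⟩
    have : 2 * b.1 * (2 * c.2) - 2 * b.2 * (2 * c.1) = 4 * x := by rw [hx]; ring
    simp only
    rw [this, abs_mul, abs_of_pos (by norm_num : (0:ℝ) < 4)]
    linarith
  by_cases h3 : |z| + |x| ≤ |y|
  · refine ⟨_, _, adm_par C c a hc ha, ?_⟩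
    have : 2 * c.1 * (2 * a.2) - 2 * c.2 * (2 * a.1) = 4 * y := by rw [hy]; ring
    simp only
    rw [this, abs_mul, abs_of_pos (by norm_num : (0:ℝ) < 4)]
    linarith
  push Not at h1 h2 h3
  have sgn : ∀ (r : ℝ) (p : ℝ × ℝ), p ∈ C → ∃ q ∈ C, |r| * q.1 = r * p.1 ∧ |r| * q.2 = r * p.2 ∧
      (q = p ∨ q = -p) := by
    intro r p hp
    rcases le_total 0 r with h | h
    · exact ⟨p, hp, by rw [abs_of_nonneg h], by rw [abs_of_nonneg h], Or.inl rfl⟩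
    · exact ⟨-p, hC p hp, by rw [abs_of_nonpos h]; simp, by rw [abs_of_nonpos h]; simp,
        Or.inr rfl⟩
  obtain ⟨a', ha', a1, a2, sa⟩ := sgn x a ha
  obtain ⟨b', hb', b1, b2, sb⟩ := sgn y b hb
  obtain ⟨c', hc', c1, c2, sc⟩ := sgn z c hc
  refine adm_hex C a' b' c' ha' hb' hc' |x| |y| |z| (by linarith) (by linarith) (by linarith)
    h1 h2 h3 ?_ ?_ ?_
  · rw [a1, b1, c1, hx, hy, hz]; ring
  · rw [a2, b2, c2, hx, hy, hz]; ring
  · rw [hz]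
    rcases sa with rfl | rfl <;> rcases sb with rfl | rfl <;> simp only [Prod.fst_neg, Prod.snd_neg]
    · rw [← abs_neg]; congr 1; ring
    · rw [← abs_neg]; congr 1; ring
    · congr 1; ring

/-- Half of the difference body, in coordinates. -/
def halfDiff (K : Set (Fin 2 → ℝ)) : Set (ℝ × ℝ) :=
  {p | ∃ k ∈ K, ∃ l ∈ K, p = ((k 0 - l 0) / 2, (k 1 - l 1) / 2)}

lemma halfDiff_neg (K : Set (Fin 2 → ℝ)) : ∀ p ∈ halfDiff K, -p ∈ halfDiff K := by
  rintro p ⟨k, hk, l, hl, rfl⟩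
  refine ⟨l, hl, k, hk, ?_⟩
  ext <;> simp <;> ring

lemma exists_mem_of_between {K : Set (Fin 2 → ℝ)} (hK : Convex ℝ K) (u : Fin 2 → ℝ)
    {k l : Fin 2 → ℝ} (hk : k ∈ K) (hl : l ∈ K) {c : ℝ} (h1 : u ⬝ᵥ k ≤ c) (h2 : c ≤ u ⬝ᵥ l) :
    ∃ y ∈ K, u ⬝ᵥ y = c := by
  have hcont : ContinuousOn (fun y : Fin 2 → ℝ => u ⬝ᵥ y) K := by
    simp only [dotProduct, Fin.sum_univ_two]
    fun_prop
  exact hK.isPreconnected.intermediate_value hk hl hcont ⟨h1, h2⟩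

/-- A value group hitting every interval of length `2|q|`. -/
lemma nonsep_of_adm {K : Set (Fin 2 → ℝ)} (hK : Convex ℝ K) (hInt : (interior K).Nonempty)
    (v w : ℝ × ℝ)
    (hdet : v.1 * w.2 - v.2 * w.1 ≠ 0) (hadm : AdmPair (halfDiff K) v w) :
    NonSeparable (latticeOf !![v.1, w.1; v.2, w.2]) K := by
  intro u hu c
  set g0 := u 0 * v.1 + u 1 * v.2 with hg0
  set g1 := u 0 * w.1 + u 1 * w.2 with hg1
  -- it suffices to find a value of the group and an interval
  suffices h : ∃ m n : ℤ, ∃ k ∈ K, ∃ l ∈ K, u ⬝ᵥ k ≤ c - (m * g0 + n * g1) ∧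
      c - (m * g0 + n * g1) ≤ u ⬝ᵥ l by
    obtain ⟨m, n, k, hk, l, hl, h1, h2⟩ := h
    obtain ⟨y, hy, hyc⟩ := exists_mem_of_between hK u hk hl h1 h2
    refine ⟨_, ⟨![m, n], rfl⟩, y, hy, ?_⟩
    rw [dotProduct_add, hyc]
    simp [dotProduct, Matrix.mulVec, Fin.sum_univ_two, hg0, hg1]
    ring
  let G : AddSubgroup ℝ := AddSubgroup.closure {g0, g1}
  have hG : ∀ x, x ∈ G ↔ ∃ m n : ℤ, m * g0 + n * g1 = x := by
    intro x
    simp [G, AddSubgroup.mem_closure_pair]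
  rcases AddSubgroup.dense_or_cyclic G with hd | ⟨g, hg⟩
  · -- dense case: find two points of K with different values
    obtain ⟨k, hk, l, hl, hkl⟩ : ∃ k ∈ K, ∃ l ∈ K, u ⬝ᵥ k < u ⬝ᵥ l := by
      obtain ⟨p, hp⟩ := hInt
      have hpK := interior_subset hp
      have hc : Continuous fun t : ℝ => p + t • u := by fun_prop
      have h0 : (fun t : ℝ => p + t • u) ⁻¹' (interior K) ∈ nhds (0 : ℝ) := by
        apply hc.continuousAt.preimage_mem_nhds
        apply isOpen_interior.mem_nhds
        simpa using hp
      obtain ⟨ε, hε, hball⟩ := Metric.mem_nhds_iff.1 h0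
      have hm : (ε / 2) ∈ Metric.ball (0 : ℝ) ε := by
        rw [Metric.mem_ball, dist_zero_right, Real.norm_eq_abs, abs_of_pos (by linarith)]
        linarith
      refine ⟨p, hpK, p + (ε / 2) • u, interior_subset (hball hm), ?_⟩
      have hpos : 0 < u ⬝ᵥ u := by
        have : 0 ≤ u ⬝ᵥ u := by
          simp only [dotProduct, Fin.sum_univ_two]; nlinarith [sq_nonneg (u 0), sq_nonneg (u 1)]
        exact lt_of_le_of_ne this (fun h => hu (dotProduct_self_eq_zero.1 h.symm))
      rw [dotProduct_add, dotProduct_smul, smul_eq_mul]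
      nlinarith [mul_pos (half_pos hε) hpos]
    obtain ⟨x, hx1, hx2⟩ := hd.exists_between (show c - u ⬝ᵥ l < c - u ⬝ᵥ k by linarith)
    obtain ⟨m, n, hmn⟩ := (hG x).1 hx1
    obtain ⟨hx2, hx3⟩ := hx2
    exact ⟨m, n, k, hk, l, hl, by rw [hmn]; linarith, by rw [hmn]; linarith⟩
  · rw [hg] at hG
    have h0 : g0 ∈ AddSubgroup.closure {g} := (hG g0).2 ⟨1, 0, by simp⟩
    have h1 : g1 ∈ AddSubgroup.closure {g} := (hG g1).2 ⟨0, 1, by simp⟩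
    obtain ⟨m, hm⟩ := AddSubgroup.mem_closure_singleton.1 h0
    obtain ⟨n, hn⟩ := AddSubgroup.mem_closure_singleton.1 h1
    rw [zsmul_eq_mul] at hm hn
    have hne : ¬ (g0 = 0 ∧ g1 = 0) := by
      rintro ⟨e0, e1⟩
      rw [hg0] at e0
      rw [hg1] at e1
      apply hu
      have z0 : u 0 = 0 := by
        have : u 0 * (v.1 * w.2 - v.2 * w.1) = 0 := by linear_combination w.2 * e0 - v.2 * e1
        exact (mul_eq_zero.1 this).resolve_right hdet
      have z1 : u 1 = 0 := by
        have : u 1 * (v.1 * w.2 - v.2 * w.1) = 0 := by linear_combination v.1 * e1 - w.1 * e0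
        exact (mul_eq_zero.1 this).resolve_right hdet
      ext i; fin_cases i
      · exact z0
      · exact z1
    have hg0' : g ≠ 0 := by
      rintro rfl
      exact hne ⟨by simpa using hm.symm, by simpa using hn.symm⟩
    have hmn : m ≠ 0 ∨ n ≠ 0 := by
      by_contra hcon
      push Not at hcon
      obtain ⟨rfl, rfl⟩ := hcon
      exact hne ⟨by simpa using hm.symm, by simpa using hn.symm⟩
    obtain ⟨p, ⟨k, hk, l, hl, rfl⟩, hp⟩ := hadm (u 0 / g) (u 1 / g) m n hmn
      (by field_simp; linarith) (by field_simp; linarith)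
    have hw : |g| ≤ |u ⬝ᵥ k - u ⬝ᵥ l| := by
      have e : u 0 / g * ((k 0 - l 0) / 2) + u 1 / g * ((k 1 - l 1) / 2) =
          (u ⬝ᵥ k - u ⬝ᵥ l) / (2 * g) := by
        simp only [dotProduct, Fin.sum_univ_two]; field_simp; ring
      simp only at hp
      rw [e, abs_div, abs_mul, abs_two, le_div_iff₀ (by positivity)] at hp
      linarith
    -- wlog the order of k and l
    obtain ⟨k', hk', l', hl', hw'⟩ : ∃ k ∈ K, ∃ l ∈ K, |g| ≤ u ⬝ᵥ l - u ⬝ᵥ k := by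
      rcases le_total (u ⬝ᵥ k) (u ⬝ᵥ l) with h | h
      · exact ⟨k, hk, l, hl, by rw [abs_of_nonpos (sub_nonpos.2 h)] at hw; linarith⟩
      · exact ⟨l, hl, k, hk, by rw [abs_of_nonneg (sub_nonneg.2 h)] at hw; linarith⟩
    have hgpos : 0 < |g| := abs_pos.2 hg0'
    have hmem : |g| ∈ AddSubgroup.closure {g} := by
      rcases abs_choice g with h | h <;> rw [h]
      · exact AddSubgroup.mem_closure_singleton.2 ⟨1, by simp⟩
      · exact AddSubgroup.mem_closure_singleton.2 ⟨-1, by simp⟩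
    have hmem2 := zsmul_mem hmem ⌊(c - u ⬝ᵥ k') / |g|⌋
    obtain ⟨i, j, hij⟩ := (hG _).1 hmem2
    refine ⟨i, j, k', hk', l', hl', ?_, ?_⟩
    · rw [hij, zsmul_eq_mul]
      have := Int.floor_le ((c - u ⬝ᵥ k') / |g|)
      rw [le_div_iff₀ hgpos] at this
      linarith
    · rw [hij, zsmul_eq_mul]
      have := Int.lt_floor_add_one ((c - u ⬝ᵥ k') / |g|)
      rw [div_lt_iff₀ hgpos] at this
      linarith

lemma final_of_points {K : Set (Fin 2 → ℝ)} (hK : Convex ℝ K) (hInt : (interior K).Nonempty)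
    (hpos : 0 < (volume K).toReal)
    (a b c : ℝ × ℝ) (ha : a ∈ halfDiff K) (hb : b ∈ halfDiff K) (hc : c ∈ halfDiff K)
    (h : 3 * Real.sqrt 3 / (2 * Real.pi) * (volume K).toReal ≤
      (b.1 * c.2 - b.2 * c.1) - (c.1 * a.2 - c.2 * a.1) + (a.1 * b.2 - a.2 * b.1)) :
    dTrans K ≤ Real.pi * Real.sqrt 3 / 8 := by
  obtain ⟨v, w, hadm, hvw⟩ := exists_adm _ (halfDiff_neg K) a b c ha hb hc
  have h1 := le_abs_self (b.1 * c.2 - b.2 * c.1)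
  have h2 := neg_le_abs (c.1 * a.2 - c.2 * a.1)
  have h3 := le_abs_self (a.1 * b.2 - a.2 * b.1)
  have h4 : 16 / 9 * (3 * Real.sqrt 3 / (2 * Real.pi) * (volume K).toReal) ≤
      |v.1 * w.2 - v.2 * w.1| := by linarith
  have hs : 0 < Real.sqrt 3 := Real.sqrt_pos.2 (by norm_num)
  have hp := Real.pi_pos
  have hdpos : 0 < |v.1 * w.2 - v.2 * w.1| := lt_of_lt_of_le (by positivity) h4
  have hdet : (!![v.1, w.1; v.2, w.2] : Matrix (Fin 2) (Fin 2) ℝ).det =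
      v.1 * w.2 - v.2 * w.1 := by rw [Matrix.det_fin_two_of]; ring
  have hle : dTrans K ≤ (volume K).toReal / |(!![v.1, w.1; v.2, w.2] :
      Matrix (Fin 2) (Fin 2) ℝ).det| := by
    refine csInf_le ⟨0, ?_⟩ ⟨!![v.1, w.1; v.2, w.2], ?_,
      nonsep_of_adm hK hInt v w (abs_pos.1 hdpos) hadm, rfl⟩
    · rintro d ⟨A, -, -, rfl⟩
      positivity
    · rw [hdet]; exact abs_pos.1 hdpos
  refine hle.trans ?_
  · rw [hdet, div_le_iff₀ hdpos]
    have h5 : Real.pi * Real.sqrt 3 / 8 *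
        (16 / 9 * (3 * Real.sqrt 3 / (2 * Real.pi) * (volume K).toReal)) = (volume K).toReal := by
      have : Real.sqrt 3 * Real.sqrt 3 = 3 := Real.mul_self_sqrt (by norm_num)
      field_simp
      nlinarith
    calc (volume K).toReal = _ := h5.symm
      _ ≤ _ := mul_le_mul_of_nonneg_left h4 (by positivity)

lemma subst_cos {m r : ℝ} (hr : 0 < r) (g : ℝ → ℝ) :
    ∫ x in Icc (m - r) (m + r), g x = ∫ t in (0:ℝ)..Real.pi, g (m + r * Real.cos t) * (r * Real.sin t) := by
  have himg : (fun t => m + r * Real.cos t) '' Icc 0 Real.pi = Icc (m - r) (m + r) := by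
    have h1 : (fun t => m + r * Real.cos t) = (fun x => m + r * x) ∘ Real.cos := rfl
    rw [h1, image_comp, Real.bijOn_cos.image_eq]
    ext x
    simp only [mem_image, mem_Icc]
    constructor
    · rintro ⟨y, ⟨h1, h2⟩, rfl⟩
      constructor <;> nlinarith
    · rintro ⟨h1, h2⟩
      refine ⟨(x - m) / r, ⟨?_, ?_⟩, by field_simp; ring⟩
      · rw [le_div_iff₀ hr]; linarith
      · rw [div_le_iff₀ hr]; linarith
  have hinj : InjOn (fun t => m + r * Real.cos t) (Icc 0 Real.pi) := by
    intro s hs t ht h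
    apply Real.injOn_cos hs ht
    simpa [hr.ne'] using h
  have hder : ∀ t ∈ Icc 0 Real.pi, HasDerivWithinAt (fun t => m + r * Real.cos t)
      (r * (-Real.sin t)) (Icc 0 Real.pi) t := by
    intro t _
    exact (((Real.hasDerivAt_cos t).const_mul r).const_add m).hasDerivWithinAt
  rw [← himg, integral_image_eq_integral_abs_deriv_smul measurableSet_Icc hder hinj g,
    intervalIntegral.integral_of_le Real.pi_pos.le, ← integral_Icc_eq_integral_Ioc]
  apply setIntegral_congr_fun measurableSet_Icc
  intro t ht
  have hs := Real.sin_nonneg_of_mem_Icc ht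
  simp only [smul_eq_mul]
  rw [abs_mul, abs_neg, abs_of_pos hr, abs_of_nonneg hs, mul_comm]

lemma ii_of_bdd {g : ℝ → ℝ} (hg : Measurable g) {M : ℝ} (hM : ∀ x, |g x| ≤ M) (a b : ℝ) :
    IntervalIntegrable g volume a b := by
  rw [intervalIntegrable_iff]
  exact Measure.integrableOn_of_bounded (M := M) (by simp) hg.aestronglyMeasurable
    (Filter.Eventually.of_forall fun x => by simpa using hM x)

lemma exists_angle {m r M : ℝ} (hr : 0 < r) (T B : ℝ → ℝ) (hT : Measurable T) (hB : Measurable B)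
    (hTM : ∀ x, |T x| ≤ M) (hBM : ∀ x, |B x| ≤ M) (y : ℝ → ℝ)
    (hy : ∀ t, y t = (T (m + r * Real.cos t) - B (m - r * Real.cos t)) / 2) :
    ∃ t : ℝ, 3 * Real.sqrt 3 / (2 * Real.pi) * (∫ x in Icc (m - r) (m + r), (T x - B x)) ≤
      Real.sqrt 3 * (y t * (r * Real.sin t) +
        y (t + Real.pi / 3) * (r * Real.sin (t + Real.pi / 3)) +
        y (t + 2 * (Real.pi / 3)) * (r * Real.sin (t + 2 * (Real.pi / 3)))) := by
  have hp := Real.pi_pos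
  have hs3 : 0 < Real.sqrt 3 := Real.sqrt_pos.2 (by norm_num)
  have hT1 : Measurable fun t => T (m + r * Real.cos t) * (r * Real.sin t) := by fun_prop
  have hB1 : Measurable fun t => B (m + r * Real.cos t) * (r * Real.sin t) := by fun_prop
  have hB2 : Measurable fun t => B (m - r * Real.cos t) * (r * Real.sin t) := by fun_prop
  have hbd : ∀ (z t : ℝ), |z| ≤ M → |z * (r * Real.sin t)| ≤ M * r := by
    intro z t hz
    rw [abs_mul, abs_mul, abs_of_pos hr]
    have := Real.abs_sin_le_one t
    have h2 : r * |Real.sin t| ≤ r := by nlinarith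
    exact mul_le_mul hz h2 (by positivity) ((abs_nonneg z).trans hz)
  have iT1 := ii_of_bdd hT1 (fun t => hbd _ t (hTM _))
  have iB1 := ii_of_bdd hB1 (fun t => hbd _ t (hBM _))
  have iB2 := ii_of_bdd hB2 (fun t => hbd _ t (hBM _))
  set Y : ℝ → ℝ := fun t => y t * (r * Real.sin t) with hY
  have hYe : Y = fun t => (T (m + r * Real.cos t) * (r * Real.sin t) -
      B (m - r * Real.cos t) * (r * Real.sin t)) / 2 := by
    funext t; simp only [hY]; rw [hy]; ring
  have iY : ∀ a b, IntervalIntegrable Y volume a b := by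
    intro a b
    rw [hYe]
    exact ((iT1 a b).sub (iB2 a b)).div_const 2
  have hrefl : ∫ t in (0:ℝ)..Real.pi, B (m - r * Real.cos t) * (r * Real.sin t) =
      ∫ t in (0:ℝ)..Real.pi, B (m + r * Real.cos t) * (r * Real.sin t) := by
    have := intervalIntegral.integral_comp_sub_left (a := 0) (b := Real.pi)
      (fun t => B (m + r * Real.cos t) * (r * Real.sin t)) Real.pi
    simp only [Real.cos_pi_sub, Real.sin_pi_sub, sub_self, sub_zero, mul_neg, ← sub_eq_add_neg]
      at this
    exact this
  set V := ∫ x in Icc (m - r) (m + r), (T x - B x) with hV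
  have hVY : ∫ t in (0:ℝ)..Real.pi, Y t = V / 2 := by
    rw [hV, subst_cos hr, hYe, intervalIntegral.integral_div,
      intervalIntegral.integral_sub (iT1 _ _) (iB2 _ _), hrefl,
      ← intervalIntegral.integral_sub (iT1 _ _) (iB1 _ _)]
    congr 2
    funext t; ring
  have iY' : ∀ d, IntervalIntegrable (fun t => Y (t + d)) volume 0 (Real.pi / 3) := by
    intro d
    have := (iY (0 + d) (Real.pi / 3 + d)).comp_add_right d
    simpa using this
  have hsum : ∫ t in (0:ℝ)..(Real.pi / 3), (Y t + Y (t + Real.pi / 3) + Y (t + 2 * (Real.pi / 3)))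
      = V / 2 := by
    rw [intervalIntegral.integral_add ((iY _ _).add (iY' _)) (iY' _),
      intervalIntegral.integral_add (iY _ _) (iY' _),
      intervalIntegral.integral_comp_add_right, intervalIntegral.integral_comp_add_right, ← hVY,
      show Real.pi / 3 + 2 * (Real.pi / 3) = Real.pi by ring,
      show Real.pi / 3 + Real.pi / 3 = 2 * (Real.pi / 3) by ring, zero_add, zero_add,
      intervalIntegral.integral_add_adjacent_intervals (iY _ _) (iY _ _),
      intervalIntegral.integral_add_adjacent_intervals (iY _ _) (iY _ _)]
  have hvol : volume (Ioc 0 (Real.pi / 3)) = ENNReal.ofReal (Real.pi / 3) := by simp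
  have iS : IntegrableOn (fun t => Y t + Y (t + Real.pi / 3) + Y (t + 2 * (Real.pi / 3)))
      (Ioc 0 (Real.pi / 3)) volume := by
    have := (((iY 0 (Real.pi / 3)).add (iY' (Real.pi / 3))).add (iY' (2 * (Real.pi / 3))))
    exact (intervalIntegrable_iff_integrableOn_Ioc_of_le (by positivity)).1 this
  obtain ⟨t, -, ht⟩ := exists_setAverage_le (by rw [hvol]; simp [hp]) (by rw [hvol]; simp) iS
  refine ⟨t, ?_⟩
  rw [setAverage_eq, ← intervalIntegral.integral_of_le (by positivity), hsum, smul_eq_mul,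
    Measure.real, hvol, ENNReal.toReal_ofReal (by positivity)] at ht
  calc 3 * Real.sqrt 3 / (2 * Real.pi) * V = Real.sqrt 3 * ((Real.pi / 3)⁻¹ * (V / 2)) := by
        field_simp
    _ ≤ _ := mul_le_mul_of_nonneg_left ht hs3.le

/-- Upper boundary function of a compact planar set. -/
lemma exists_top {K : Set (Fin 2 → ℝ)} (hK : IsCompact K) :
    ∃ T : ℝ → ℝ, Measurable T ∧ (∃ M, ∀ x, |T x| ≤ M) ∧
      ∀ p ∈ K, ![p 0, T (p 0)] ∈ K ∧ p 1 ≤ T (p 0) := by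
  classical
  have c0 : Continuous fun p : Fin 2 → ℝ => p 0 := continuous_apply 0
  have c1 : Continuous fun p : Fin 2 → ℝ => p 1 := continuous_apply 1
  have hex : ∀ x : ℝ, (∃ p ∈ K, p 0 = x) → ∃ q ∈ K, q 0 = x ∧ ∀ p ∈ K, p 0 = x → p 1 ≤ q 1 := by
    intro x ⟨p, hp, hpx⟩
    have hc : IsCompact (K ∩ {p | p 0 = x}) := hK.inter_right (isClosed_eq c0 continuous_const)
    obtain ⟨q, hq, hmax⟩ := hc.exists_isMaxOn ⟨p, hp, hpx⟩ c1.continuousOn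
    exact ⟨q, hq.1, hq.2, fun p hp h => hmax ⟨hp, h⟩⟩
  let T : ℝ → ℝ := fun x => if h : ∃ p ∈ K, p 0 = x then (hex x h).choose 1 else 0
  have hT : ∀ x, (∃ p ∈ K, p 0 = x) → ∃ q ∈ K, q 0 = x ∧ q 1 = T x ∧
      ∀ p ∈ K, p 0 = x → p 1 ≤ q 1 := by
    intro x h
    obtain ⟨h1, h2, h3⟩ := (hex x h).choose_spec
    exact ⟨_, h1, h2, by simp only [T]; rw [dif_pos h], h3⟩
  have hT0 : ∀ x, ¬ (∃ p ∈ K, p 0 = x) → T x = 0 := fun x h => dif_neg h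
  refine ⟨T, ?_, ?_, ?_⟩
  · apply measurable_of_Ici
    intro c
    have hcl : MeasurableSet ((fun p : Fin 2 → ℝ => p 0) '' (K ∩ {p | c ≤ p 1})) :=
      ((hK.inter_right (isClosed_le continuous_const c1)).image c0).measurableSet
    have hcl2 : MeasurableSet ((fun p : Fin 2 → ℝ => p 0) '' K) := (hK.image c0).measurableSet
    have : T ⁻¹' Ici c = (fun p : Fin 2 → ℝ => p 0) '' (K ∩ {p | c ≤ p 1}) ∪
        (((fun p : Fin 2 → ℝ => p 0) '' K)ᶜ ∩ {_x | c ≤ 0}) := by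
      ext x
      by_cases h : ∃ p ∈ K, p 0 = x
      · obtain ⟨q, hq, hq0, hq1, hq2⟩ := hT x h
        simp only [mem_preimage, mem_Ici, mem_union, mem_image, mem_inter_iff, mem_compl_iff,
          mem_ofPred_eq, h, not_true_eq_false, false_and, or_false]
        constructor
        · intro hc
          exact ⟨q, ⟨hq, by rw [hq1]; exact hc⟩, hq0⟩
        · rintro ⟨p, ⟨hp, hpc⟩, hp0⟩
          rw [← hq1]
          exact hpc.trans (hq2 p hp hp0)
      · simp only [mem_preimage, mem_Ici, mem_union, mem_image, mem_inter_iff, mem_compl_iff,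
          mem_ofPred_eq, h, not_false_eq_true, true_and, hT0 x h]
        constructor
        · exact Or.inr
        · rintro (⟨p, ⟨hp, _⟩, hp0⟩ | h')
          · exact absurd ⟨p, hp, hp0⟩ h
          · exact h'
    rw [this]
    exact hcl.union (hcl2.compl.inter (MeasurableSet.const _))
  · obtain ⟨M, hM⟩ := hK.exists_bound_of_continuousOn c1.continuousOn
    refine ⟨max M 0, fun x => ?_⟩
    by_cases h : ∃ p ∈ K, p 0 = x
    · obtain ⟨q, hq, hq0, hq1, hq2⟩ := hT x h
      rw [← hq1]
      exact (hM q hq).trans (le_max_left _ _)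
    · rw [hT0 x h]; simp
  · intro p hp
    obtain ⟨q, hq, hq0, hq1, hq2⟩ := hT (p 0) ⟨p, hp, rfl⟩
    refine ⟨?_, ?_⟩
    · convert hq using 1
      ext i; fin_cases i
      · simp [hq0]
      · simp [hq1]
    · rw [← hq1]; exact hq2 p hp rfl

lemma exists_bot {K : Set (Fin 2 → ℝ)} (hK : IsCompact K) :
    ∃ B : ℝ → ℝ, Measurable B ∧ (∃ M, ∀ x, |B x| ≤ M) ∧
      ∀ p ∈ K, ![p 0, B (p 0)] ∈ K ∧ B (p 0) ≤ p 1 := by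
  have hc : Continuous fun p : Fin 2 → ℝ => (![p 0, -p 1] : Fin 2 → ℝ) := by
    refine continuous_pi fun i => ?_
    fin_cases i
    · exact continuous_apply 0
    · exact (continuous_apply 1).neg
  obtain ⟨T, hT, ⟨M, hM⟩, h⟩ := exists_top (hK.image hc)
  refine ⟨fun x => -T x, hT.neg, ⟨M, fun x => by rw [abs_neg]; exact hM x⟩, fun p hp => ?_⟩
  obtain ⟨⟨q, hq, hq'⟩, h2⟩ := h _ ⟨p, hp, rfl⟩
  simp only [cons_val_zero, cons_val_one] at hq' h2
  have e0 := congrFun hq' 0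
  have e1 := congrFun hq' 1
  simp only [cons_val_zero, cons_val_one] at e0 e1
  refine ⟨?_, by linarith⟩
  convert hq using 1
  ext i; fin_cases i
  · simp [e0]
  · simp [← e1]

lemma volume_eq {K : Set (Fin 2 → ℝ)} (hK : IsCompact K) (hconv : Convex ℝ K)
    {T B : ℝ → ℝ} (hTm : Measurable T) (hBm : Measurable B)
    (hT : ∀ p ∈ K, ![p 0, T (p 0)] ∈ K ∧ p 1 ≤ T (p 0))
    (hB : ∀ p ∈ K, ![p 0, B (p 0)] ∈ K ∧ B (p 0) ≤ p 1)
    {lo hi : ℝ} (hproj : (fun p : Fin 2 → ℝ => p 0) '' K = Icc lo hi) :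
    (volume K).toReal = ∫ x in Icc lo hi, (T x - B x) := by
  have hpre : (MeasurableEquiv.finTwoArrow (α := ℝ)) ⁻¹'
      (MeasurableEquiv.finTwoArrow.symm ⁻¹' K) = K := by
    rw [← preimage_comp, MeasurableEquiv.symm_comp_self, preimage_id]
  have hms : MeasurableSet ((MeasurableEquiv.finTwoArrow (α := ℝ)).symm ⁻¹' K) :=
    (MeasurableEquiv.finTwoArrow (α := ℝ)).symm.measurable hK.measurableSet
  have hsec : ∀ x, volume (Prod.mk x ⁻¹' ((MeasurableEquiv.finTwoArrow (α := ℝ)).symm ⁻¹' K)) =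
      (Icc lo hi).indicator (fun x => ENNReal.ofReal (T x - B x)) x := by
    intro x
    have hset : Prod.mk x ⁻¹' ((MeasurableEquiv.finTwoArrow (α := ℝ)).symm ⁻¹' K) =
        {y | (![x, y] : Fin 2 → ℝ) ∈ K} := by
      ext y; rfl
    rw [hset]
    by_cases hx : x ∈ Icc lo hi
    · rw [indicator_of_mem hx, ← Real.volume_Icc]
      rw [← hproj] at hx
      obtain ⟨p, hp, rfl⟩ := hx
      congr 1
      ext y
      simp only [mem_ofPred_eq, mem_Icc]
      constructor
      · intro hy
        have h1 := (hT _ hy).2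
        have h2 := (hB _ hy).2
        simp only [cons_val_zero, cons_val_one] at h1 h2
        exact ⟨h2, h1⟩
      · rintro ⟨h1, h2⟩
        obtain ⟨z, hz, hz'⟩ := exists_mem_of_between
          (hconv.inter (convex_hyperplane (f := fun q : Fin 2 → ℝ => q 0)
            ⟨fun _ _ => rfl, fun _ _ => rfl⟩ (p 0))) ![0, 1]
          (k := ![p 0, B (p 0)]) (l := ![p 0, T (p 0)]) (c := y)
          ⟨(hB p hp).1, by simp⟩ ⟨(hT p hp).1, by simp⟩
          (by simpa [dotProduct, Fin.sum_univ_two] using h1)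
          (by simpa [dotProduct, Fin.sum_univ_two] using h2)
        have hz0 : z 0 = p 0 := hz.2
        have hz1 : z 1 = y := by simpa [dotProduct, Fin.sum_univ_two] using hz'
        convert hz.1 using 1
        ext i; fin_cases i
        · simp [hz0]
        · simp [hz1]
    · rw [indicator_of_notMem hx]
      have : {y | (![x, y] : Fin 2 → ℝ) ∈ K} = ∅ := by
        ext y
        simp only [mem_ofPred_eq, mem_empty_iff_false, iff_false]
        intro hy
        apply hx
        rw [← hproj]
        exact ⟨_, hy, rfl⟩
      rw [this, measure_empty]
  have hvol : volume K = ∫⁻ x in Icc lo hi, ENNReal.ofReal (T x - B x) := by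
    conv_lhs => rw [← hpre]
    rw [(volume_preserving_finTwoArrow ℝ).measure_preimage hms.nullMeasurableSet,
      Measure.volume_eq_prod, Measure.prod_apply hms]
    simp_rw [hsec]
    rw [lintegral_indicator measurableSet_Icc]
  rw [hvol, integral_eq_lintegral_of_nonneg_ae]
  · refine (ae_restrict_iff' measurableSet_Icc).2 (Filter.Eventually.of_forall fun x hx => ?_)
    rw [← hproj] at hx
    obtain ⟨p, hp, rfl⟩ := hx
    have h1 := (hT p hp).2
    have h2 := (hB p hp).2
    simp only [Pi.zero_apply]
    linarith
  · exact (hTm.sub hBm).aestronglyMeasurable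

/-- For every convex body `K ⊆ ℝ²` one has `d_{2,1}(K) ≤ π√3/8`. -/
theorem d21_le_pi_sqrt_three_div_eight (K : Set (Fin 2 → ℝ))
    (hKc : IsCompact K) (hKconv : Convex ℝ K) (hKint : (interior K).Nonempty) :
    dTrans K ≤ Real.pi * Real.sqrt 3 / 8 := by
  have hpos : 0 < (volume K).toReal :=
    ENNReal.toReal_pos (Measure.measure_pos_of_nonempty_interior volume hKint).ne' hKc.measure_lt_top.ne
  obtain ⟨T, hTm, ⟨M₁, hM₁⟩, hT⟩ := exists_top hKc
  obtain ⟨B, hBm, ⟨M₂, hM₂⟩, hB⟩ := exists_bot hKc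
  have c0 : Continuous fun p : Fin 2 → ℝ => p 0 := continuous_apply 0
  have hne : K.Nonempty := hKint.mono interior_subset
  obtain ⟨lo, hi, hproj⟩ : ∃ lo hi : ℝ, (fun p : Fin 2 → ℝ => p 0) '' K = Icc lo hi :=
    ⟨_, _, eq_Icc_of_connected_compact
      ((hKconv.isConnected hne).image _ c0.continuousOn) (hKc.image c0)⟩
  have hV := volume_eq hKc hKconv hTm hBm hT hB hproj
  have hlt : lo < hi := by
    by_contra hcon
    push Not at hcon
    have h0 : volume (Icc lo hi) = 0 := by simp [hcon]
    rw [hV, setIntegral_measure_zero _ h0] at hpos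
    exact lt_irrefl _ hpos
  obtain ⟨m, hm⟩ : ∃ m, m = (lo + hi) / 2 := ⟨_, rfl⟩
  obtain ⟨r, hr⟩ : ∃ r, r = (hi - lo) / 2 := ⟨_, rfl⟩
  have hr0 : 0 < r := by rw [hr]; linarith
  have hlo : lo = m - r := by rw [hm, hr]; ring
  have hhi : hi = m + r := by rw [hm, hr]; ring
  rw [hlo, hhi] at hV hproj
  obtain ⟨y, hy⟩ : ∃ y : ℝ → ℝ,
      ∀ t, y t = (T (m + r * Real.cos t) - B (m - r * Real.cos t)) / 2 := ⟨_, fun _ => rfl⟩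
  obtain ⟨t, ht⟩ := exists_angle hr0 T B hTm hBm (fun x => (hM₁ x).trans (le_max_left M₁ M₂))
    (fun x => (hM₂ x).trans (le_max_right M₁ M₂)) y hy
  have hmem : ∀ t, (r * Real.cos t, y t) ∈ halfDiff K := by
    intro t
    have h1 := Real.neg_one_le_cos t
    have h2 := Real.cos_le_one t
    have m1 : m + r * Real.cos t ∈ Icc (m - r) (m + r) := by constructor <;> nlinarith
    have m2 : m - r * Real.cos t ∈ Icc (m - r) (m + r) := by constructor <;> nlinarith
    rw [← hproj] at m1 m2
    obtain ⟨p, hp, hp'⟩ := m1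
    obtain ⟨q, hq, hq'⟩ := m2
    simp only at hp' hq'
    refine ⟨_, (hT p hp).1, _, (hB q hq).1, ?_⟩
    rw [hp', hq', hy]
    ext <;> simp
  refine final_of_points hKconv hKint hpos _ _ _ (hmem t) (hmem (t + Real.pi / 3))
    (hmem (t + 2 * (Real.pi / 3))) ?_
  rw [hV]
  refine ht.trans (le_of_eq ?_)
  have hs : Real.sqrt 3 * Real.sqrt 3 = 3 := Real.mul_self_sqrt (by norm_num)
  have k1 : Real.cos (2 * (Real.pi / 3)) = -1 / 2 := by
    rw [Real.cos_two_mul, Real.cos_pi_div_three]; norm_num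
  have k2 : Real.sin (2 * (Real.pi / 3)) = Real.sqrt 3 / 2 := by
    rw [Real.sin_two_mul, Real.cos_pi_div_three, Real.sin_pi_div_three]; ring
  simp only [Real.cos_add, Real.sin_add, k1, k2, Real.cos_pi_div_three, Real.sin_pi_div_three]
  generalize y (t + Real.pi / 3) = y1
  generalize y (t + 2 * (Real.pi / 3)) = y2
  linear_combination (r / 2 * Real.cos t * (y1 + y2)) * hs
end
end

section
/- If K is a convex body in ℝ² with d_{2,1}(K) = π√3/8, then K is an ellipse, i.e., the image of the closed unit disc under an invertible affine transformation. -/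
open MeasureTheory Set Matrix Pointwise

noncomputable section

/-- An ellipse: the image of the closed unit disc under an invertible affine map. -/
def IsEllipse (K : Set (Fin 2 → ℝ)) : Prop :=
  ∃ A : Matrix (Fin 2) (Fin 2) ℝ, A.det ≠ 0 ∧ ∃ v : Fin 2 → ℝ,
    K = (fun x => A.mulVec x + v) '' {x : Fin 2 → ℝ | x ⬝ᵥ x ≤ 1}

/-! ### Lattice part -/

lemma nonsep_of_width (A : Matrix (Fin 2) (Fin 2) ℝ) (K : Set (Fin 2 → ℝ)) (hA : A.det ≠ 0)
    (hKconv : Convex ℝ K) (hKint : (interior K).Nonempty)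
    (h : ∀ (u : Fin 2 → ℝ) (m n : ℤ), (m ≠ 0 ∨ n ≠ 0) → u 0 * A 0 0 + u 1 * A 1 0 = m →
      u 0 * A 0 1 + u 1 * A 1 1 = n → ∃ p ∈ K, ∃ p' ∈ K, 1 ≤ u ⬝ᵥ p - u ⬝ᵥ p') :
    NonSeparable (latticeOf A) K := by
  intro u hu c
  have hS : ∀ p ∈ K, ∀ p' ∈ K, ∀ s : ℝ, u ⬝ᵥ p' ≤ s → s ≤ u ⬝ᵥ p → ∃ y ∈ K, u ⬝ᵥ y = s := by
    intro p hp p' hp' s h1 h2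
    rcases eq_or_lt_of_le (h1.trans h2) with h3 | h3
    · exact ⟨p, hp, by linarith⟩
    · refine ⟨((u ⬝ᵥ p - s) / (u ⬝ᵥ p - u ⬝ᵥ p')) • p' + ((s - u ⬝ᵥ p') / (u ⬝ᵥ p - u ⬝ᵥ p')) • p,
        hKconv hp' hp ?_ ?_ ?_, ?_⟩
      · exact div_nonneg (by linarith) (by linarith)
      · exact div_nonneg (by linarith) (by linarith)
      · rw [← add_div, div_eq_one_iff_eq (by linarith)]; ring
      · have h4 : u ⬝ᵥ p - u ⬝ᵥ p' ≠ 0 := by linarith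
        rw [dotProduct_add, dotProduct_smul, dotProduct_smul, smul_eq_mul, smul_eq_mul]
        field_simp; ring
  set x := u 0 * A 0 0 + u 1 * A 1 0 with hx
  set y := u 0 * A 0 1 + u 1 * A 1 1 with hy
  have hxy : x ≠ 0 ∨ y ≠ 0 := by
    by_contra hcon
    push Not at hcon
    obtain ⟨h1, h2⟩ := hcon
    rw [Matrix.det_fin_two] at hA
    apply hu
    have e0 : u 0 * (A 0 0 * A 1 1 - A 0 1 * A 1 0) = 0 := by linear_combination A 1 1 * h1 - A 1 0 * h2
    have e1 : u 1 * (A 0 0 * A 1 1 - A 0 1 * A 1 0) = 0 := by linear_combination A 0 0 * h2 - A 0 1 * h1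
    ext i
    fin_cases i
    · simpa using (mul_eq_zero.1 e0).resolve_right hA
    · simpa using (mul_eq_zero.1 e1).resolve_right hA
  have hlat : ∀ m n : ℤ, ∃ z ∈ latticeOf A, u ⬝ᵥ z = m * x + n * y := by
    intro m n
    refine ⟨_, ⟨![m, n], rfl⟩, ?_⟩
    simp [dotProduct, Matrix.mulVec, Fin.sum_univ_two, hx, hy]
    ring
  have key : ∀ m n : ℤ, (∃ k ∈ K, u ⬝ᵥ k = c - (m * x + n * y)) →
      ∃ x ∈ latticeOf A, ∃ y ∈ K, u ⬝ᵥ (x + y) = c := by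
    rintro m n ⟨k, hk, hk2⟩
    obtain ⟨z, hz, hz2⟩ := hlat m n
    exact ⟨z, hz, k, hk, by rw [dotProduct_add, hz2, hk2]; ring⟩
  rcases AddSubgroup.dense_or_cyclic (AddSubgroup.closure ({x, y} : Set ℝ)) with hd | ⟨g, hg⟩
  · obtain ⟨y0, hy0⟩ := hKint
    have h0 : ∃ ε : ℝ, ε > 0 ∧ y0 + ε • u ∈ K := by
      have hc : Continuous fun ε : ℝ => y0 + ε • u := by fun_prop
      have : ∀ᶠ ε : ℝ in nhds 0, y0 + ε • u ∈ interior K := by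
        apply hc.continuousAt.eventually_mem
        simpa using isOpen_interior.mem_nhds hy0
      obtain ⟨δ, hδ, hb⟩ := Metric.eventually_nhds_iff.1 this
      exact ⟨δ / 2, by positivity, interior_subset (hb (by simp [abs_of_pos hδ]; linarith))⟩
    obtain ⟨ε, hε, h1⟩ := h0
    have hpos : 0 < u ⬝ᵥ u := by
      have : 0 ≤ u ⬝ᵥ u := by
        simp only [dotProduct, Fin.sum_univ_two]; nlinarith [mul_self_nonneg (u 0), mul_self_nonneg (u 1)]
      exact lt_of_le_of_ne this fun h => hu (dotProduct_self_eq_zero.1 h.symm)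
    have hlt : u ⬝ᵥ y0 < u ⬝ᵥ (y0 + ε • u) := by
      rw [dotProduct_add, dotProduct_smul, smul_eq_mul]; nlinarith [mul_pos hε hpos]
    obtain ⟨z, hz, hz1, hz2⟩ := hd.exists_between (show c - u ⬝ᵥ (y0 + ε • u) < c - u ⬝ᵥ y0 by linarith)
    obtain ⟨m, n, hmn⟩ := AddSubgroup.mem_closure_pair.1 hz
    rw [zsmul_eq_mul, zsmul_eq_mul] at hmn
    apply key m n
    rw [hmn]
    exact hS _ h1 _ (interior_subset hy0) _ (by linarith) (by linarith)
  · have hxm : x ∈ AddSubgroup.closure ({g} : Set ℝ) := by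
      rw [← hg]; exact AddSubgroup.subset_closure (by simp)
    have hym : y ∈ AddSubgroup.closure ({g} : Set ℝ) := by
      rw [← hg]; exact AddSubgroup.subset_closure (by simp)
    have hgm : g ∈ AddSubgroup.closure ({x, y} : Set ℝ) := by
      rw [hg]; exact AddSubgroup.subset_closure (by simp)
    obtain ⟨i, hi⟩ := AddSubgroup.mem_closure_singleton.1 hxm
    obtain ⟨j, hj⟩ := AddSubgroup.mem_closure_singleton.1 hym
    obtain ⟨m, n, hmn⟩ := AddSubgroup.mem_closure_pair.1 hgm
    rw [zsmul_eq_mul] at hi hj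
    rw [zsmul_eq_mul, zsmul_eq_mul] at hmn
    have hg0 : g ≠ 0 := by
      rintro rfl
      simp at hi hj
      rcases hxy with h | h
      · exact h hi.symm
      · exact h hj.symm
    have hij : i ≠ 0 ∨ j ≠ 0 := by
      by_contra hcon
      push Not at hcon
      obtain ⟨h1, h2⟩ := hcon
      subst h1 h2
      simp at hi hj
      rcases hxy with h | h
      · exact h hi.symm
      · exact h hj.symm
    obtain ⟨p, hp, p', hp', hpp⟩ := h (g⁻¹ • u) i j hij
      (by
        have : g⁻¹ * x = i := by rw [← hi]; field_simp
        rw [← this, hx]; simp; ring)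
      (by
        have : g⁻¹ * y = j := by rw [← hj]; field_simp
        rw [← this, hy]; simp; ring)
    rw [smul_dotProduct, smul_dotProduct, smul_eq_mul, smul_eq_mul] at hpp
    -- choose the integer
    set N : ℤ := ⌊g⁻¹ * (c - u ⬝ᵥ p')⌋ with hN
    have hN1 : (N : ℝ) ≤ g⁻¹ * (c - u ⬝ᵥ p') := Int.floor_le _
    have hN2 : g⁻¹ * (c - u ⬝ᵥ p') < N + 1 := Int.lt_floor_add_one _
    apply key (N * m) (N * n)
    have e : ((N * m : ℤ) : ℝ) * x + ((N * n : ℤ) : ℝ) * y = N * g := by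
      push_cast; rw [← hmn]; ring
    rw [e]
    have e1 : g⁻¹ * (u ⬝ᵥ p') ≤ g⁻¹ * (c - N * g) := by
      have : g⁻¹ * (c - N * g) = g⁻¹ * c - N := by field_simp
      rw [this]; linarith
    have e2 : g⁻¹ * (c - N * g) ≤ g⁻¹ * (u ⬝ᵥ p) := by
      have : g⁻¹ * (c - N * g) = g⁻¹ * c - N := by field_simp
      rw [this]; linarith
    rcases lt_or_gt_of_ne hg0 with hneg | hpos
    · have hi' : g⁻¹ < 0 := inv_lt_zero.2 hneg
      exact hS _ hp' _ hp _ ((mul_le_mul_left_of_neg hi').1 e2) ((mul_le_mul_left_of_neg hi').1 e1)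
    · have hi' : 0 < g⁻¹ := inv_pos.2 hpos
      exact hS _ hp _ hp' _ (le_of_mul_le_mul_left e1 hi') (le_of_mul_le_mul_left e2 hi')

/-- The planar cross product. -/
def cr (p q : ℝ × ℝ) : ℝ := p.1 * q.2 - p.2 * q.1

/-- Membership in half the difference body. -/
def InM (P : Set (ℝ × ℝ)) (q : ℝ × ℝ) : Prop :=
  ∃ p ∈ P, ∃ p' ∈ P, q.1 = (p.1 - p'.1) / 2 ∧ q.2 = (p.2 - p'.2) / 2

/-- A set of `Fin 2 → ℝ` viewed in `ℝ × ℝ`. -/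
def toP (K : Set (Fin 2 → ℝ)) : Set (ℝ × ℝ) := {p | ![p.1, p.2] ∈ K}

/-- The hexagon property. -/
def HH (P : Set (ℝ × ℝ)) (V : ℝ) : Prop :=
  ∀ a b c, InM P a → InM P b → InM P c →
    2 * Real.pi * √3 * (cr a b + cr b c + cr a c) ≤ 9 * V ∧
    (2 * Real.pi * √3 * (cr a b + cr b c + cr a c) = 9 * V → cr a b = cr b c ∧ cr b c = cr a c)

lemma bound_of_basis (K : Set (Fin 2 → ℝ)) (C V : ℝ)
    (hKconv : Convex ℝ K) (hKint : (interior K).Nonempty)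
    (hC : ∀ A : Matrix (Fin 2) (Fin 2) ℝ, A.det ≠ 0 → NonSeparable (latticeOf A) K →
      C ≤ V / |A.det|) (v w : ℝ × ℝ) (hvw : cr v w ≠ 0)
    (h : ∀ (u : ℝ × ℝ) (m n : ℤ), (m ≠ 0 ∨ n ≠ 0) → u.1 * v.1 + u.2 * v.2 = m →
      u.1 * w.1 + u.2 * w.2 = n → ∃ q, InM (toP K) q ∧ 1 / 2 ≤ |u.1 * q.1 + u.2 * q.2|) :
    C * |cr v w| ≤ V := by
  have hdet : (!![v.1, w.1; v.2, w.2] : Matrix (Fin 2) (Fin 2) ℝ).det = cr v w := by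
    rw [Matrix.det_fin_two_of, cr]; ring
  have := hC !![v.1, w.1; v.2, w.2] (by rwa [hdet]) ?_
  · rw [hdet] at this
    rwa [le_div_iff₀ (abs_pos.2 hvw)] at this
  · apply nonsep_of_width _ _ (by rwa [hdet]) hKconv hKint
    intro u m n hmn h1 h2
    obtain ⟨q, ⟨p, hp, p', hp', e1, e2⟩, hq⟩ := h (u 0, u 1) m n hmn (by simpa using h1) (by simpa using h2)
    simp only [e1, e2] at hq
    rcases le_abs.1 hq with hq | hq
    · refine ⟨_, hp, _, hp', ?_⟩
      simp [dotProduct, Fin.sum_univ_two]; linarith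
    · refine ⟨_, hp', _, hp, ?_⟩
      simp [dotProduct, Fin.sum_univ_two]; linarith

lemma para_bound (K : Set (Fin 2 → ℝ)) (C V : ℝ) (hC0 : 0 < C) (hV : 0 ≤ V)
    (hKconv : Convex ℝ K) (hKint : (interior K).Nonempty)
    (hC : ∀ A : Matrix (Fin 2) (Fin 2) ℝ, A.det ≠ 0 → NonSeparable (latticeOf A) K →
      C ≤ V / |A.det|) (a b : ℝ × ℝ) (ha : InM (toP K) a) (hb : InM (toP K) b) :
    4 * C * cr a b ≤ V := by
  rcases le_or_gt (cr a b) 0 with h0 | h0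
  · nlinarith
  have e : cr ((2 * a.1, 2 * a.2) : ℝ × ℝ) (2 * b.1, 2 * b.2) = 4 * cr a b := by
    simp only [cr]; ring
  have := bound_of_basis K C V hKconv hKint hC (2 * a.1, 2 * a.2) (2 * b.1, 2 * b.2)
    (by rw [e]; positivity) ?_
  · rw [e, abs_of_pos (by positivity)] at this; linarith
  · intro u m n hmn h1 h2
    simp only at h1 h2
    rcases hmn with h | h
    · refine ⟨a, ha, ?_⟩
      have : (1 : ℝ) ≤ |(m : ℝ)| := by exact_mod_cast Int.one_le_abs h
      have e2 : u.1 * a.1 + u.2 * a.2 = m / 2 := by linarith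
      rw [e2, abs_div, abs_two]; linarith
    · refine ⟨b, hb, ?_⟩
      have : (1 : ℝ) ≤ |(n : ℝ)| := by exact_mod_cast Int.one_le_abs h
      have e2 : u.1 * b.1 + u.2 * b.2 = n / 2 := by linarith
      rw [e2, abs_div, abs_two]; linarith

lemma half_le_of_comb {y z s p q : ℝ} (hy : 0 < y) (hz : 0 < z)
    (h : (y + z) * (2 * s) = y * p + z * q) (hpq : (1 ≤ p ∧ 1 ≤ q) ∨ (p ≤ -1 ∧ q ≤ -1)) :
    1 / 2 ≤ |s| := by
  have hyz : 0 < y + z := by linarith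
  rcases hpq with ⟨h1, h2⟩ | ⟨h1, h2⟩
  · have : 1 ≤ 2 * s := by
      refine le_of_mul_le_mul_left ?_ hyz
      rw [h]; nlinarith
    rw [le_abs]; left; linarith
  · have : 1 ≤ -(2 * s) := by
      refine le_of_mul_le_mul_left ?_ hyz
      rw [mul_neg, h]; nlinarith
    rw [le_abs]; right; linarith

lemma hex_bound (K : Set (Fin 2 → ℝ)) (C V : ℝ)
    (hKconv : Convex ℝ K) (hKint : (interior K).Nonempty)
    (hC : ∀ A : Matrix (Fin 2) (Fin 2) ℝ, A.det ≠ 0 → NonSeparable (latticeOf A) K →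
      C ≤ V / |A.det|) (a b c : ℝ × ℝ) (ha : InM (toP K) a) (hb : InM (toP K) b)
    (hc : InM (toP K) c) (x y z : ℝ) (hx : 0 < x) (hy : 0 < y) (hz : 0 < z)
    (hα : cr b c = y + z) (hβ : cr a c = x + z) (hγ : cr a b = x + y) :
    4 * C * ((y + z) * (x + z) * (x + y)) ≤ V * (x * y + y * z + z * x) := by
  set D := x * y + y * z + z * x with hD
  have hD0 : 0 < D := by positivity
  set v : ℝ × ℝ := ((2 * (y + z) * (x + z) * a.1 - 2 * z * (x + z) * b.1) / D,
    (2 * (y + z) * (x + z) * a.2 - 2 * z * (x + z) * b.2) / D) with hv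
  set w : ℝ × ℝ := ((2 * z * (y + z) * a.1 - 2 * (y + z) * (x + z) * b.1) / D,
    (2 * z * (y + z) * a.2 - 2 * (y + z) * (x + z) * b.2) / D) with hw
  have e : cr v w = - (4 * ((y + z) * (x + z) * (x + y)) / D) := by
    rw [← hγ]
    simp only [cr, hv, hw]
    field_simp
    rw [hD]
    ring
  have hpos : 0 < 4 * ((y + z) * (x + z) * (x + y)) / D := by positivity
  have := bound_of_basis K C V hKconv hKint hC v w
    (by rw [e]; exact neg_ne_zero.2 hpos.ne') ?_
  · rw [e, abs_neg, abs_of_pos hpos] at this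
    have h2 := mul_le_mul_of_nonneg_right this hD0.le
    refine le_trans (le_of_eq ?_) h2
    field_simp
  · intro u p q hmn h1 h2
    set A := u.1 * a.1 + u.2 * a.2 with hA
    set B := u.1 * b.1 + u.2 * b.2 with hB
    set G := u.1 * c.1 + u.2 * c.2 with hG
    have h1' : D * p = 2 * (y + z) * (x + z) * A - 2 * z * (x + z) * B := by
      rw [← h1, hv, hA, hB]; field_simp; ring
    have h2' : D * q = 2 * z * (y + z) * A - 2 * (y + z) * (x + z) * B := by
      rw [← h2, hw, hA, hB]; field_simp; ring
    have cA : (y + z) * (2 * A) = y * p + z * (p - q) := by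
      have : D * ((y + z) * (2 * A)) = D * (y * p + z * (p - q)) := by
        rw [hD] at *; linear_combination -(y + z) * h1' + z * h2'
      exact mul_left_cancel₀ hD0.ne' this
    have cB : (x + z) * (2 * B) = x * (-q) + z * (p - q) := by
      have : D * ((x + z) * (2 * B)) = D * (x * (-q) + z * (p - q)) := by
        rw [hD] at *; linear_combination -z * h1' + (x + z) * h2'
      exact mul_left_cancel₀ hD0.ne' this
    have cG0 : (x + y) * G = (x + z) * B - (y + z) * A := by
      rw [← hα, ← hβ, ← hγ, hA, hB, hG]; simp only [cr]; ring
    have cG : (y + x) * (2 * G) = y * (-p) + x * (-q) := by linarith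
    have hcases : ((1 ≤ p ∧ 1 ≤ p - q) ∨ (p ≤ -1 ∧ p - q ≤ -1)) ∨
        ((1 ≤ -q ∧ 1 ≤ p - q) ∨ (-q ≤ -1 ∧ p - q ≤ -1)) ∨
        ((1 ≤ -p ∧ 1 ≤ -q) ∨ (-p ≤ -1 ∧ -q ≤ -1)) := by omega
    rcases hcases with h | h | h
    · exact ⟨a, ha, half_le_of_comb hy hz cA (by exact_mod_cast h)⟩
    · exact ⟨b, hb, half_le_of_comb hx hz cB (by exact_mod_cast h)⟩
    · exact ⟨c, hc, half_le_of_comb hy hx cG (by exact_mod_cast h)⟩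

lemma schur_xyz {x y z : ℝ} (hx : 0 < x) (hy : 0 < y) (hz : 0 < z) :
    8 * (x + y + z) * (x * y + y * z + z * x) ≤ 9 * ((y + z) * (x + z) * (x + y)) := by
  nlinarith [mul_nonneg hx.le (sq_nonneg (y - z)), mul_nonneg hy.le (sq_nonneg (x - z)),
    mul_nonneg hz.le (sq_nonneg (x - y))]

lemma schur_xyz_eq {x y z : ℝ} (hx : 0 < x) (hy : 0 < y) (hz : 0 < z)
    (h : 9 * ((y + z) * (x + z) * (x + y)) ≤ 8 * (x + y + z) * (x * y + y * z + z * x)) :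
    x = y ∧ y = z := by
  have h1 : x * (y - z) ^ 2 + y * (x - z) ^ 2 + z * (x - y) ^ 2 ≤ 0 := by nlinarith
  have p1 := mul_nonneg hx.le (sq_nonneg (y - z))
  have p2 := mul_nonneg hy.le (sq_nonneg (x - z))
  have p3 := mul_nonneg hz.le (sq_nonneg (x - y))
  have q1 : x * (y - z) ^ 2 = 0 := by linarith
  have q3 : z * (x - y) ^ 2 = 0 := by linarith
  constructor
  · have := pow_eq_zero_iff (two_ne_zero) |>.1 ((mul_eq_zero.1 q3).resolve_left hz.ne')
    linarith
  · have := pow_eq_zero_iff (two_ne_zero) |>.1 ((mul_eq_zero.1 q1).resolve_left hx.ne')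
    linarith

lemma cr_swap (a b : ℝ × ℝ) : cr a b = - cr b a := by simp only [cr]; ring

lemma HH_of_C (K : Set (Fin 2 → ℝ)) (V : ℝ) (hV : 0 < V)
    (hKconv : Convex ℝ K) (hKint : (interior K).Nonempty)
    (hC : ∀ A : Matrix (Fin 2) (Fin 2) ℝ, A.det ≠ 0 → NonSeparable (latticeOf A) K →
      Real.pi * √3 / 8 ≤ V / |A.det|) : HH (toP K) V := by
  intro a b c ha hb hc
  set C := Real.pi * √3 / 8 with hCd
  have hC0 : 0 < C := by have := Real.pi_pos; positivity
  have e : 2 * Real.pi * √3 = 16 * C := by rw [hCd]; ring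
  rw [e]
  have hab := para_bound K C V hC0 hV.le hKconv hKint hC a b ha hb
  have hac := para_bound K C V hC0 hV.le hKconv hKint hC a c ha hc
  have hbc := para_bound K C V hC0 hV.le hKconv hKint hC b c hb hc
  set α := cr b c with hα
  set β := cr a c with hβ
  set γ := cr a b with hγ
  by_cases h1 : α + β ≤ γ
  · have : C * (α + β) ≤ C * γ := mul_le_mul_of_nonneg_left h1 hC0.le
    constructor
    · nlinarith
    · intro h; exfalso; nlinarith
  by_cases h2 : α + γ ≤ β
  · have : C * (α + γ) ≤ C * β := mul_le_mul_of_nonneg_left h2 hC0.le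
    constructor
    · nlinarith
    · intro h; exfalso; nlinarith
  by_cases h3 : β + γ ≤ α
  · have : C * (β + γ) ≤ C * α := mul_le_mul_of_nonneg_left h3 hC0.le
    constructor
    · nlinarith
    · intro h; exfalso; nlinarith
  push Not at h1 h2 h3
  obtain ⟨x, hx⟩ : ∃ x, x = (β + γ - α) / 2 := ⟨_, rfl⟩
  obtain ⟨y, hy⟩ : ∃ y, y = (α + γ - β) / 2 := ⟨_, rfl⟩
  obtain ⟨z, hz⟩ : ∃ z, z = (α + β - γ) / 2 := ⟨_, rfl⟩
  have hx0 : 0 < x := by linarith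
  have hy0 : 0 < y := by linarith
  have hz0 : 0 < z := by linarith
  have eα : α = y + z := by linarith
  have eβ : β = x + z := by linarith
  have eγ : γ = x + y := by linarith
  have hb := hex_bound K C V hKconv hKint hC a b c ha hb hc x y z hx0 hy0 hz0 eα eβ eγ
  have hs := schur_xyz hx0 hy0 hz0
  have hD : 0 < x * y + y * z + z * x := by positivity
  have es : γ + α + β = 2 * (x + y + z) := by linarith
  rw [es]
  have hchain : 32 * C * (x + y + z) * (x * y + y * z + z * x) ≤ 9 * V * (x * y + y * z + z * x) := by
    have := mul_le_mul_of_nonneg_left hs (show 0 ≤ 4 * C by positivity)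
    nlinarith
  constructor
  · have := le_of_mul_le_mul_right hchain hD
    linarith
  · intro h
    have hh : 9 * ((y + z) * (x + z) * (x + y)) ≤ 8 * (x + y + z) * (x * y + y * z + z * x) := by
      have h4 : 4 * C * (9 * ((y + z) * (x + z) * (x + y))) ≤
          4 * C * (8 * (x + y + z) * (x * y + y * z + z * x)) := by
        have h5 : 9 * V * (x * y + y * z + z * x) =
          16 * C * (2 * (x + y + z)) * (x * y + y * z + z * x) := by rw [h]
        nlinarith
      exact le_of_mul_le_mul_left h4 (by positivity)
    obtain ⟨q1, q2⟩ := schur_xyz_eq hx0 hy0 hz0 hh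
    constructor <;> linarith

/-! ### Bodies with the hexagon property -/

/-- Convex bodies with the hexagon property. -/
structure Good (P : Set (ℝ × ℝ)) : Prop where
  cpt : IsCompact P
  conv : Convex ℝ P
  int : (interior P).Nonempty
  hh : HH P (volume P).toReal

lemma Good.vol_pos {P : Set (ℝ × ℝ)} (h : Good P) : 0 < (volume P).toReal := by
  apply ENNReal.toReal_pos
  · exact (Measure.measure_pos_of_nonempty_interior _ h.int).ne'
  · exact h.cpt.measure_lt_top.ne

lemma InM.neg {P : Set (ℝ × ℝ)} {q : ℝ × ℝ} (h : InM P q) : InM P (-q) := by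
  obtain ⟨p, hp, p', hp', h1, h2⟩ := h
  exact ⟨p', hp', p, hp, by simp [h1]; ring, by simp [h2]; ring⟩

/-- The linear map with matrix `(p q; r s)`. -/
def lin (p q r s : ℝ) (v : ℝ × ℝ) : ℝ × ℝ := (p * v.1 + q * v.2, r * v.1 + s * v.2)

lemma cr_lin (p q r s : ℝ) (a b : ℝ × ℝ) :
    cr (lin p q r s a) (lin p q r s b) = (p * s - q * r) * cr a b := by
  simp only [cr, lin]; ring

lemma InM_lin {P : Set (ℝ × ℝ)} {a : ℝ × ℝ} (p q r s : ℝ) (h : InM P a) :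
    InM (lin p q r s '' P) (lin p q r s a) := by
  obtain ⟨x, hx, y, hy, h1, h2⟩ := h
  refine ⟨_, ⟨x, hx, rfl⟩, _, ⟨y, hy, rfl⟩, ?_, ?_⟩ <;> simp only [lin, h1, h2] <;> ring

lemma InM_of_lin {P : Set (ℝ × ℝ)} {a : ℝ × ℝ} {p q r s : ℝ} (h : InM (_root_.lin p q r s '' P) a) :
    ∃ a', InM P a' ∧ a = _root_.lin p q r s a' := by
  obtain ⟨_, ⟨x, hx, rfl⟩, _, ⟨y, hy, rfl⟩, h1, h2⟩ := h
  refine ⟨((x.1 - y.1) / 2, (x.2 - y.2) / 2), ⟨x, hx, y, hy, rfl, rfl⟩, ?_⟩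
  ext
  · rw [h1]; simp only [_root_.lin]; ring
  · rw [h2]; simp only [_root_.lin]; ring

lemma lin_eq (p q r s : ℝ) : lin p q r s =
    Matrix.toLin (Module.Basis.finTwoProd ℝ) (Module.Basis.finTwoProd ℝ) !![p, q; r, s] := by
  funext v
  rw [Matrix.toLin_finTwoProd_apply, lin]

lemma volume_lin (P : Set (ℝ × ℝ)) (p q r s : ℝ) (hd : 0 < p * s - q * r) :
    (volume (lin p q r s '' P)).toReal = (p * s - q * r) * (volume P).toReal := by
  rw [lin_eq, MeasureTheory.Measure.addHaar_image_linearMap, LinearMap.det_toLin,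
    Matrix.det_fin_two_of, abs_of_pos hd, ENNReal.toReal_mul, ENNReal.toReal_ofReal hd.le]

lemma Good.map {P : Set (ℝ × ℝ)} (h : Good P) (p q r s : ℝ) (hd : 0 < p * s - q * r) :
    Good (lin p q r s '' P) := by
  set f : ℝ × ℝ →ₗ[ℝ] ℝ × ℝ :=
    Matrix.toLin (Module.Basis.finTwoProd ℝ) (Module.Basis.finTwoProd ℝ) !![p, q; r, s] with hf
  have hfl : lin p q r s = f := by
    rw [lin_eq]
  have hdet : LinearMap.det f = p * s - q * r := by
    rw [hf, LinearMap.det_toLin, Matrix.det_fin_two_of]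
  have hsurj : Function.Surjective f := by
    have := (LinearMap.equivOfDetNeZero f (by rw [hdet]; exact hd.ne')).surjective
    exact this
  have hcont : Continuous f := LinearMap.continuous_of_finiteDimensional f
  have hopen : IsOpenMap f := LinearMap.isOpenMap_of_finiteDimensional f hsurj
  have hvol : (volume (lin p q r s '' P)).toReal = (p * s - q * r) * (volume P).toReal := by
    exact volume_lin P p q r s hd
  refine ⟨?_, ?_, ?_, ?_⟩
  · rw [hfl]; exact h.cpt.image hcont
  · rw [hfl]; exact h.conv.linear_image f
  · rw [hfl]; exact (h.int.image f).mono (hopen.image_interior_subset P)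
  · rw [hvol]
    intro a b c ha hb hc
    obtain ⟨a, ha', rfl⟩ := InM_of_lin ha
    obtain ⟨b, hb', rfl⟩ := InM_of_lin hb
    obtain ⟨c, hc', rfl⟩ := InM_of_lin hc
    rw [cr_lin, cr_lin, cr_lin]
    obtain ⟨h1, h2⟩ := h.hh a b c ha' hb' hc'
    have e : 2 * Real.pi * √3 * ((p * s - q * r) * cr a b + (p * s - q * r) * cr b c
      + (p * s - q * r) * cr a c) = (p * s - q * r) *
        (2 * Real.pi * √3 * (cr a b + cr b c + cr a c)) := by ring
    have e2 : 9 * ((p * s - q * r) * (volume P).toReal) =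
      (p * s - q * r) * (9 * (volume P).toReal) := by ring
    rw [e, e2]
    refine ⟨mul_le_mul_of_nonneg_left h1 hd.le, fun h3 => ?_⟩
    obtain ⟨h4, h5⟩ := h2 (mul_left_cancel₀ hd.ne' h3)
    rw [h4, h5]; exact ⟨rfl, rfl⟩

/-! ### The averaging argument -/

/-- Half-difference vertex of a six-tuple. -/
def hq (p p' : ℝ × ℝ) : ℝ × ℝ := ((p.1 - p'.1) / 2, (p.2 - p'.2) / 2)

/-- Half of the signed area of the hexagon associated with a six-tuple. -/
def hexsum (p : Fin 6 → ℝ × ℝ) : ℝ :=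
  cr (hq (p 0) (p 3)) (hq (p 1) (p 4)) + cr (hq (p 1) (p 4)) (hq (p 2) (p 5)) +
    cr (hq (p 0) (p 3)) (hq (p 2) (p 5))

lemma InM_hq {P : Set (ℝ × ℝ)} {p p' : ℝ × ℝ} (h : p ∈ P) (h' : p' ∈ P) : InM P (hq p p') :=
  ⟨p, h, p', h', rfl, rfl⟩

lemma cos_third (t : ℝ) : Real.cos (t + Real.pi / 3) = Real.cos t / 2 - √3 / 2 * Real.sin t := by
  rw [Real.cos_add, Real.cos_pi_div_three, Real.sin_pi_div_three]; ring

lemma sin_third (t : ℝ) : Real.sin (t + Real.pi / 3) = Real.sin t / 2 + √3 / 2 * Real.cos t := by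
  rw [Real.sin_add, Real.cos_pi_div_three, Real.sin_pi_div_three]; ring

/-- angle of the k-th vertex -/
def ang (t : ℝ) (k : Fin 6) : ℝ := t + (k : ℝ) * (Real.pi / 3)

lemma ang0 (t : ℝ) : ang t 0 = t := by simp [ang]
lemma ang1 (t : ℝ) : ang t 1 = t + Real.pi / 3 := by simp [ang]
lemma ang2 (t : ℝ) : ang t 2 = t + Real.pi / 3 + Real.pi / 3 := by simp [ang]; ring
lemma ang3 (t : ℝ) : ang t 3 = t + Real.pi := by simp [ang]; ring
lemma ang4 (t : ℝ) : ang t 4 = t + Real.pi / 3 + Real.pi := by simp [ang]; ring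
lemma ang5 (t : ℝ) : ang t 5 = t + Real.pi / 3 + Real.pi / 3 + Real.pi := by simp [ang]; ring

lemma hexsum_formula (m w t : ℝ) (Y : Fin 6 → ℝ) :
    hexsum (fun k => (m + w * Real.cos (ang t k), Y k)) =
      w * (√3 / 2) * ∑ k, Y k * Real.sin (ang t k) := by
  have h3 : √3 * √3 = 3 := Real.mul_self_sqrt (by norm_num)
  simp only [hexsum, hq, cr, Fin.sum_univ_six, ang0, ang1, ang2, ang3, ang4, ang5, Real.cos_add_pi,
    Real.sin_add_pi, cos_third, sin_third]
  set c := Real.cos t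
  set s := Real.sin t
  set r := √3
  have h3' : r ^ 2 = 3 := by rw [sq]; exact h3
  have h33 : r ^ 3 = 3 * r := by rw [pow_succ, h3']
  ring_nf
  simp only [h3', h33]
  ring

lemma exists_range {P : Set (ℝ × ℝ)} (h : Good P) : ∃ m w : ℝ, 0 < w ∧
    (∀ p ∈ P, m - w ≤ p.1 ∧ p.1 ≤ m + w) ∧
    (∀ x, m - w ≤ x → x ≤ m + w → ∃ y, (x, y) ∈ P) := by
  have hne : P.Nonempty := h.int.mono interior_subset
  obtain ⟨p, hp, hpmin⟩ := h.cpt.exists_isMinOn hne continuous_fst.continuousOn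
  obtain ⟨p', hp', hpmax⟩ := h.cpt.exists_isMaxOn hne continuous_fst.continuousOn
  have hlt : p.1 < p'.1 := by
    obtain ⟨y0, hy0⟩ := h.int
    have hc : Continuous fun ε : ℝ => y0 + ε • ((1, 0) : ℝ × ℝ) := by fun_prop
    have : ∀ᶠ ε : ℝ in nhds 0, y0 + ε • ((1, 0) : ℝ × ℝ) ∈ interior P := by
      apply hc.continuousAt.eventually_mem
      simpa using isOpen_interior.mem_nhds hy0
    obtain ⟨δ, hδ, hb⟩ := Metric.eventually_nhds_iff.1 this
    have h1 := interior_subset (hb (show dist (δ / 2) 0 < δ by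
      simp [abs_of_pos hδ]; linarith))
    have h2 := hpmin (interior_subset hy0)
    have h3 := hpmax h1
    simp at h2 h3
    linarith
  refine ⟨(p.1 + p'.1) / 2, (p'.1 - p.1) / 2, by linarith, ?_, ?_⟩
  · intro q hq
    have h2 := hpmin hq
    have h3 := hpmax hq
    simp at h2 h3
    constructor <;> linarith
  · intro x h1 h2
    have h1' : p.1 ≤ x := by linarith
    have h2' : x ≤ p'.1 := by linarith
    have hd : p'.1 - p.1 ≠ 0 := by linarith
    refine ⟨((p'.1 - x) / (p'.1 - p.1)) * p.2 + ((x - p.1) / (p'.1 - p.1)) * p'.2, ?_⟩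
    have := h.conv hp hp' (show 0 ≤ (p'.1 - x) / (p'.1 - p.1) from div_nonneg (by linarith) (by linarith))
      (show 0 ≤ (x - p.1) / (p'.1 - p.1) from div_nonneg (by linarith) (by linarith))
      (by field_simp; ring)
    convert this using 1
    ext
    · simp; field_simp; ring
    · simp

/-- Length of vertical slices. -/
def phi (P : Set (ℝ × ℝ)) (x : ℝ) : ℝ := (volume (Prod.mk x ⁻¹' P)).toReal

lemma slice {P : Set (ℝ × ℝ)} (h : Good P) {x y : ℝ} (hy : (x, y) ∈ P) :
    ∃ b t, (x, b) ∈ P ∧ (x, t) ∈ P ∧ phi P x = t - b := by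
  have hc : IsCompact (Prod.mk x ⁻¹' P) := by
    have hcl : IsClosed (Prod.mk x ⁻¹' P) := h.cpt.isClosed.preimage (by fun_prop)
    have h2 : IsCompact (Prod.snd '' P) := h.cpt.image continuous_snd
    exact h2.of_isClosed_subset hcl fun z hz => ⟨_, hz, rfl⟩
  have hne : (Prod.mk x ⁻¹' P).Nonempty := ⟨y, hy⟩
  have hconv : Convex ℝ (Prod.mk x ⁻¹' P) := by
    intro u hu v hv a b ha hb hab
    have := h.conv hu hv ha hb hab
    simp only [mem_preimage]
    convert this using 1
    ext
    · simp [← add_mul, hab]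
    · simp
  have hI : Prod.mk x ⁻¹' P = Icc (sInf (Prod.mk x ⁻¹' P)) (sSup (Prod.mk x ⁻¹' P)) := by
    exact eq_Icc_of_connected_compact ⟨hne, hconv.isPreconnected⟩ hc
  have h1 := hc.sInf_mem hne
  have h2 := hc.sSup_mem hne
  refine ⟨_, _, h1, h2, ?_⟩
  have hle : sInf (Prod.mk x ⁻¹' P) ≤ sSup (Prod.mk x ⁻¹' P) :=
    csInf_le_csSup hne hc.bddBelow hc.bddAbove
  rw [phi]
  conv_lhs => rw [hI]
  rw [Real.volume_Icc, ENNReal.toReal_ofReal (by linarith)]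

lemma phi_meas {P : Set (ℝ × ℝ)} (h : Good P) : Measurable (phi P) :=
  (measurable_measure_prodMk_left h.cpt.measurableSet).ennreal_toReal

lemma phi_bdd {P : Set (ℝ × ℝ)} (h : Good P) : ∃ R, ∀ x, |phi P x| ≤ R := by
  have h2 : IsCompact (Prod.snd '' P) := h.cpt.image continuous_snd
  refine ⟨(volume (Prod.snd '' P)).toReal, fun x => ?_⟩
  rw [phi, abs_of_nonneg ENNReal.toReal_nonneg]
  apply ENNReal.toReal_mono h2.measure_lt_top.ne
  exact measure_mono fun z hz => ⟨_, hz, rfl⟩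

lemma phi_integral {P : Set (ℝ × ℝ)} (h : Good P) (m w : ℝ)
    (hr : ∀ p ∈ P, m - w ≤ p.1 ∧ p.1 ≤ m + w) :
    ∫ x in Icc (m - w) (m + w), phi P x = (volume P).toReal := by
  have h0 : ∀ x, x ∉ Icc (m - w) (m + w) → phi P x = 0 := by
    intro x hx
    have : Prod.mk x ⁻¹' P = ∅ := by
      ext y
      simp only [mem_preimage, mem_empty_iff_false, iff_false]
      intro hy
      exact hx (hr _ hy)
    simp [phi, this]
  rw [setIntegral_eq_integral_of_forall_compl_eq_zero h0]
  simp only [phi]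
  have hlt : volume P < ⊤ := h.cpt.measure_lt_top
  have hm := measurable_measure_prodMk_left (ν := (volume : Measure ℝ)) h.cpt.measurableSet
  have e : volume P = ∫⁻ x, volume (Prod.mk x ⁻¹' P) := by
    rw [Measure.volume_eq_prod, Measure.prod_apply h.cpt.measurableSet]
  rw [integral_toReal hm.aemeasurable, ← e]
  apply ae_lt_top hm
  rw [← e]; exact hlt.ne

/-- the integrand after the substitution `x = m + w cos t` -/
def GG (P : Set (ℝ × ℝ)) (m w t : ℝ) : ℝ := phi P (m + w * Real.cos t) * |Real.sin t|

lemma GG_periodic (P : Set (ℝ × ℝ)) (m w : ℝ) : Function.Periodic (GG P m w) (2 * Real.pi) := by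
  intro t; simp [GG]

lemma GG_meas {P : Set (ℝ × ℝ)} (h : Good P) (m w : ℝ) : Measurable (GG P m w) := by
  unfold GG
  have := phi_meas h
  have h2 : Measurable fun t => m + w * Real.cos t := by fun_prop
  exact (this.comp h2).mul (by fun_prop)

lemma GG_int {P : Set (ℝ × ℝ)} (h : Good P) (m w a b c : ℝ) :
    IntervalIntegrable (fun t => GG P m w (t + c)) volume a b := by
  obtain ⟨R, hR⟩ := phi_bdd h
  have hm : Measurable fun t => GG P m w (t + c) := (GG_meas h m w).comp (by fun_prop)
  rw [intervalIntegrable_iff]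
  apply Measure.integrableOn_of_bounded (M := R)
  · simp
  · exact hm.aestronglyMeasurable
  · filter_upwards with t
    rw [GG, Real.norm_eq_abs, abs_mul, abs_abs]
    have := hR (m + w * Real.cos (t + c))
    have h1 := Real.abs_sin_le_one (t + c)
    nlinarith [abs_nonneg (phi P (m + w * Real.cos (t + c)))]

lemma GG_integral {P : Set (ℝ × ℝ)} (h : Good P) (m w : ℝ) (hw : 0 < w)
    (hr : ∀ p ∈ P, m - w ≤ p.1 ∧ p.1 ≤ m + w) (c : ℝ) :
    ∫ t in (0)..(2 * Real.pi), GG P m w (t + c) = 2 * (volume P).toReal / w := by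
  rw [intervalIntegral.integral_comp_add_right (fun t => GG P m w t)]
  have e1 := (GG_periodic P m w).intervalIntegral_add_eq (0 + c) (-Real.pi)
  have e2 : (0 + c) + 2 * Real.pi = 2 * Real.pi + c := by ring
  have e3 : -Real.pi + 2 * Real.pi = Real.pi := by ring
  rw [e2, e3] at e1
  rw [e1]
  have hInt : ∀ a b, IntervalIntegrable (GG P m w) volume a b := by
    intro a b; simpa using GG_int h m w a b 0
  rw [← intervalIntegral.integral_add_adjacent_intervals (hInt (-Real.pi) 0) (hInt 0 Real.pi)]
  have e4 : ∫ t in (-Real.pi)..0, GG P m w t = ∫ t in (0)..Real.pi, GG P m w t := by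
    have := intervalIntegral.integral_comp_neg (a := 0) (b := Real.pi) (GG P m w)
    rw [neg_zero] at this
    rw [← this]
    congr 1
    funext t
    simp [GG]
  rw [e4]
  have e5 : ∫ t in (0)..Real.pi, GG P m w t = (volume P).toReal / w := by
    rw [← phi_integral h m w hr]
    have himg : (fun t => m + w * Real.cos t) '' (Icc 0 Real.pi) = Icc (m - w) (m + w) := by
      have := Real.bijOn_cos.image_eq
      rw [show (fun t => m + w * Real.cos t) = (fun x => m + w * x) ∘ Real.cos from rfl,
        image_comp, this]
      ext x
      simp only [mem_image, mem_Icc]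
      constructor
      · rintro ⟨y, ⟨h1, h2⟩, rfl⟩
        constructor <;> nlinarith
      · rintro ⟨h1, h2⟩
        refine ⟨(x - m) / w, ⟨?_, ?_⟩, by field_simp; ring⟩
        · rw [le_div_iff₀ hw]; linarith
        · rw [div_le_iff₀ hw]; linarith
    rw [← himg, integral_image_eq_integral_abs_deriv_smul (f' := fun t => w * (-Real.sin t))
      measurableSet_Icc]
    · rw [intervalIntegral.integral_of_le Real.pi_pos.le, ← integral_Icc_eq_integral_Ioc,
        eq_div_iff hw.ne', ← integral_mul_const]
      congr 1
      funext t
      rw [GG, smul_eq_mul, abs_mul, abs_neg, abs_of_pos hw]; ring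
    · intro t _
      exact (((Real.hasDerivAt_cos t).const_mul w).const_add m).hasDerivWithinAt
    · intro a ha b hb hab
      apply Real.injOn_cos ha hb
      simp only at hab
      exact mul_left_cancel₀ hw.ne' (add_left_cancel hab)
  rw [e5]; ring

/-- Data produced by the averaging argument. -/
def XData (P : Set (ℝ × ℝ)) (m w : ℝ) : Prop :=
  0 < w ∧ (∀ p ∈ P, m - w ≤ p.1 ∧ p.1 ≤ m + w) ∧
    ∀ t ∈ Icc 0 (2 * Real.pi), ∃ p : Fin 6 → ℝ × ℝ, (∀ k, p k ∈ P) ∧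
      (∀ k, (p k).1 = m + w * Real.cos (ang t k)) ∧
      2 * Real.pi * √3 * hexsum p = 9 * (volume P).toReal

lemma continuous_hexsum : Continuous hexsum := by
  unfold hexsum cr hq
  fun_prop

lemma hexsum_le {P : Set (ℝ × ℝ)} (h : Good P) {p : Fin 6 → ℝ × ℝ} (hp : ∀ k, p k ∈ P) :
    2 * Real.pi * √3 * hexsum p ≤ 9 * (volume P).toReal :=
  (h.hh _ _ _ (InM_hq (hp 0) (hp 3)) (InM_hq (hp 1) (hp 4)) (InM_hq (hp 2) (hp 5))).1

lemma neg_hexsum_le {P : Set (ℝ × ℝ)} (h : Good P) {p : Fin 6 → ℝ × ℝ} (hp : ∀ k, p k ∈ P) :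
    2 * Real.pi * √3 * (-hexsum p) ≤ 9 * (volume P).toReal := by
  refine le_trans (le_of_eq ?_)
    (h.hh _ _ _ (InM_hq (hp 2) (hp 5)) (InM_hq (hp 1) (hp 4)) (InM_hq (hp 0) (hp 3))).1
  simp only [hexsum, cr]; ring

lemma propX {P : Set (ℝ × ℝ)} (h : Good P) : ∃ m w, XData P m w := by
  obtain ⟨m, w, hw, hr, hex⟩ := exists_range h
  refine ⟨m, w, hw, hr, ?_⟩
  set V := (volume P).toReal with hV
  have hpi := Real.pi_pos
  have h3 : √3 * √3 = 3 := Real.mul_self_sqrt (by norm_num)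
  have h3p : 0 < √3 := by positivity
  set c0 : ℝ := 2 * Real.pi * √3 with hc0
  have hc0p : 0 < c0 := by positivity
  set S : ℝ → ℝ := fun t => c0 * (w * (√3 / 2)) * ∑ k, GG P m w (t + (k : Fin 6) * (Real.pi / 3)) with hS
  -- pointwise comparison
  have hpt : ∀ t, S t ≤ 18 * V ∧ (S t = 18 * V → ∃ p : Fin 6 → ℝ × ℝ, (∀ k, p k ∈ P) ∧
      (∀ k, (p k).1 = m + w * Real.cos (ang t k)) ∧ c0 * hexsum p = 9 * V) := by
    intro t
    have hsl : ∀ k : Fin 6, ∃ b u, (m + w * Real.cos (ang t k), b) ∈ P ∧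
        (m + w * Real.cos (ang t k), u) ∈ P ∧ phi P (m + w * Real.cos (ang t k)) = u - b := by
      intro k
      have h1 := Real.neg_one_le_cos (ang t k)
      have h2 := Real.cos_le_one (ang t k)
      obtain ⟨y, hy⟩ := hex (m + w * Real.cos (ang t k)) (by nlinarith) (by nlinarith)
      exact slice h hy
    choose b u hb hu hbu using hsl
    set Y : Fin 6 → ℝ := fun k => if 0 ≤ Real.sin (ang t k) then u k else b k with hY
    set Y' : Fin 6 → ℝ := fun k => if 0 ≤ Real.sin (ang t k) then b k else u k with hY'
    have hYP : ∀ k, (m + w * Real.cos (ang t k), Y k) ∈ P := by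
      intro k; simp only [hY]; split_ifs
      · exact hu k
      · exact hb k
    have hYP' : ∀ k, (m + w * Real.cos (ang t k), Y' k) ∈ P := by
      intro k; simp only [hY']; split_ifs
      · exact hb k
      · exact hu k
    have hterm : ∀ k : Fin 6, GG P m w (t + (k : Fin 6) * (Real.pi / 3)) =
        Y k * Real.sin (ang t k) - Y' k * Real.sin (ang t k) := by
      intro k
      change phi P (m + w * Real.cos (ang t k)) * |Real.sin (ang t k)| = _
      rw [hbu]
      simp only [hY, hY']
      split_ifs with hs
      · rw [abs_of_nonneg hs]; ring
      · rw [abs_of_neg (not_le.1 hs)]; ring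
    have hSt : S t = c0 * hexsum (fun k => (m + w * Real.cos (ang t k), Y k)) +
        c0 * (-hexsum (fun k => (m + w * Real.cos (ang t k), Y' k))) := by
      rw [hexsum_formula, hexsum_formula]
      simp only [hS]
      rw [Finset.sum_congr rfl (fun k _ => hterm k), Finset.sum_sub_distrib]
      ring
    have i1 := hexsum_le h hYP
    have i2 := neg_hexsum_le h hYP'
    rw [← hc0, ← hV] at i1 i2
    refine ⟨by rw [hSt]; linarith, fun he => ⟨_, hYP, fun k => rfl, ?_⟩⟩
    rw [hSt] at he
    linarith
  -- integral
  have hSint : IntervalIntegrable S volume 0 (2 * Real.pi) := by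
    have : IntervalIntegrable (∑ k : Fin 6, fun t => GG P m w (t + (k : Fin 6) * (Real.pi / 3)))
        volume 0 (2 * Real.pi) := IntervalIntegrable.sum _ fun k _ => GG_int h m w _ _ _
    have := this.const_mul (c0 * (w * (√3 / 2)))
    simpa [hS, Finset.sum_apply] using this
  have hSval : ∫ t in (0)..(2 * Real.pi), S t = 36 * Real.pi * V := by
    simp only [hS]
    rw [intervalIntegral.integral_const_mul, intervalIntegral.integral_finsetSum
      (fun k _ => GG_int h m w _ _ _)]
    rw [Finset.sum_congr rfl (fun (k : Fin 6) _ => GG_integral h m w hw hr _)]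
    rw [Finset.sum_const, Finset.card_univ, Fintype.card_fin, hc0, ← hV]
    simp only [nsmul_eq_mul]
    field_simp
    push_cast
    linear_combination (12 * V) * h3
  have hae : ∀ᵐ t ∂(volume.restrict (Ioc 0 (2 * Real.pi))), 18 * V - S t = 0 := by
    have hi : Integrable (fun t => 18 * V - S t) (volume.restrict (Ioc 0 (2 * Real.pi))) := by
      have h1 : IntegrableOn S (Ioc 0 (2 * Real.pi)) := hSint.1
      exact (integrable_const _).sub h1
    have h0 : ∫ t in Ioc 0 (2 * Real.pi), (18 * V - S t) = 0 := by
      rw [← intervalIntegral.integral_of_le (by positivity),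
        intervalIntegral.integral_sub (by simp) hSint, hSval]
      simp; ring
    have := (integral_eq_zero_iff_of_nonneg (fun t => by
      have := (hpt t).1; simp only [Pi.zero_apply]; linarith) hi).1 h0
    exact this
  -- closure
  set Z : Set (ℝ × (Fin 6 → ℝ × ℝ)) := {z | z.1 ∈ Icc 0 (2 * Real.pi) ∧ (∀ k, z.2 k ∈ P) ∧
      (∀ k, (z.2 k).1 = m + w * Real.cos (ang z.1 k)) ∧ c0 * hexsum z.2 = 9 * V} with hZ
  have hZc : IsCompact Z := by
    have hbig : IsCompact ((Icc 0 (2 * Real.pi)) ×ˢ (Set.univ.pi fun _ : Fin 6 => P)) :=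
      isCompact_Icc.prod (isCompact_univ_pi fun _ => h.cpt)
    have hcl : IsClosed {z : ℝ × (Fin 6 → ℝ × ℝ) | (∀ k, (z.2 k).1 = m + w * Real.cos (ang z.1 k)) ∧
        c0 * hexsum z.2 = 9 * V} := by
      rw [ofPred_and]
      apply IsClosed.inter
      · rw [ofPred_forall]
        apply isClosed_iInter
        intro k
        apply isClosed_eq
        · fun_prop
        · unfold ang; fun_prop
      · apply isClosed_eq
        · exact continuous_const.mul (continuous_hexsum.comp continuous_snd)
        · fun_prop
    convert hbig.inter_right hcl using 1
    ext z
    simp only [hZ, mem_ofPred_eq, mem_inter_iff, mem_prod, mem_pi, mem_univ, true_implies]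
    tauto
  have hFc : IsClosed (Prod.fst '' Z) := (hZc.image continuous_fst).isClosed
  have hU : Ioo 0 (2 * Real.pi) \ (Prod.fst '' Z) = ∅ := by
    have ho : IsOpen (Ioo 0 (2 * Real.pi) \ (Prod.fst '' Z)) := isOpen_Ioo.sdiff hFc
    apply ho.eq_empty_of_measure_zero (μ := (volume : Measure ℝ))
    rw [ae_restrict_iff' measurableSet_Ioc] at hae
    refine measure_mono_null ?_ hae
    rintro t ⟨ht, htZ⟩ hcon
    simp only [mem_ofPred_eq] at hcon
    have := hcon ⟨ht.1, ht.2.le⟩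
    obtain ⟨p, hp1, hp2, hp3⟩ := (hpt t).2 (by linarith)
    exact htZ ⟨(t, p), ⟨⟨ht.1.le, ht.2.le⟩, hp1, hp2, hp3⟩, rfl⟩
  have hsub : Icc 0 (2 * Real.pi) ⊆ Prod.fst '' Z := by
    rw [← closure_Ioo (by positivity)]
    exact closure_minimal (sdiff_eq_empty.1 hU) hFc
  intro t ht
  obtain ⟨⟨t', p⟩, hz, rfl⟩ := hsub ht
  exact ⟨p, hz.2.1, hz.2.2.1, hz.2.2.2⟩

/-! ### Maximal hexagons -/

/-- `±a, ±b, ±(b-a)` is a maximal hexagon in the difference body. -/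
def MaxHex (P : Set (ℝ × ℝ)) (a b : ℝ × ℝ) : Prop :=
  InM P a ∧ InM P b ∧ InM P (b - a) ∧ 6 * Real.pi * √3 * cr a b = 9 * (volume P).toReal

lemma MaxHex.pos {P : Set (ℝ × ℝ)} (h : Good P) {a b : ℝ × ℝ} (hm : MaxHex P a b) : 0 < cr a b := by
  have h1 := h.vol_pos
  have h2 := hm.2.2.2
  have h3 : 0 < 6 * Real.pi * √3 := by have := Real.pi_pos; positivity
  by_contra hcon
  nlinarith

lemma MaxHex.cr_eq {P : Set (ℝ × ℝ)} {a b a' b' : ℝ × ℝ} (hm : MaxHex P a b)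
    (hm' : MaxHex P a' b') : cr a b = cr a' b' := by
  have h3 : 0 < 6 * Real.pi * √3 := by have := Real.pi_pos; positivity
  exact mul_left_cancel₀ h3.ne' (hm.2.2.2.trans hm'.2.2.2.symm)

lemma MaxHex.rot {P : Set (ℝ × ℝ)} {a b : ℝ × ℝ} (hm : MaxHex P a b) : MaxHex P b (b - a) := by
  obtain ⟨h1, h2, h3, h4⟩ := hm
  refine ⟨h2, h3, ?_, ?_⟩
  · have : b - a - b = -a := by abel
    rw [this]; exact h1.neg
  · rw [← h4]; congr 1; simp only [cr, Prod.fst_sub, Prod.snd_sub]; ring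

lemma hex_le {P : Set (ℝ × ℝ)} (h : Good P) {a b : ℝ × ℝ} (hm : MaxHex P a b)
    {p q r : ℝ × ℝ} (hp : InM P p) (hq : InM P q) (hr : InM P r) :
    cr p q + cr q r + cr p r ≤ 3 * cr a b := by
  have h1 := (h.hh p q r hp hq hr).1
  have h3 : 0 < 2 * Real.pi * √3 := by have := Real.pi_pos; positivity
  refine le_of_mul_le_mul_left (h1.trans (le_of_eq ?_)) h3
  rw [← hm.2.2.2]; ring

lemma MaxHex.support_a {P : Set (ℝ × ℝ)} (h : Good P) {a b p : ℝ × ℝ} (hm : MaxHex P a b)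
    (hp : InM P p) : 2 * cr p b - cr p a ≤ 2 * cr a b := by
  have := hex_le h hm hp hm.2.1 hm.2.2.1
  simp only [cr, Prod.fst_sub, Prod.snd_sub] at *
  linarith

lemma MaxHex.support_b {P : Set (ℝ × ℝ)} (h : Good P) {a b p : ℝ × ℝ} (hm : MaxHex P a b)
    (hp : InM P p) : 2 * cr a p - cr b p ≤ 2 * cr a b := by
  have := hex_le h hm hm.1 hp hm.2.2.1
  simp only [cr, Prod.fst_sub, Prod.snd_sub] at *
  linarith

lemma MaxHex.unique {P : Set (ℝ × ℝ)} (h : Good P) {a b b' : ℝ × ℝ} (hm : MaxHex P a b)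
    (hm' : MaxHex P a b') : b = b' := by
  have h0 := hm.pos h
  have h1 := hm.cr_eq hm'
  have h2 := hm.support_b h hm'.2.1
  have h3 := hm'.support_b h hm.2.1
  have h4 : cr b b' = - cr b' b := cr_swap _ _
  have h5 : cr b b' = 0 := by linarith
  have e1 : cr a b * (b'.1 - b.1) = 0 := by
    have e : cr a b * b'.1 - cr a b' * b.1 = - a.1 * cr b b' := by simp only [cr]; ring
    rw [h5, ← h1] at e; linarith
  have e2 : cr a b * (b'.2 - b.2) = 0 := by
    have e : cr a b * b'.2 - cr a b' * b.2 = - a.2 * cr b b' := by simp only [cr]; ring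
    rw [h5, ← h1] at e; linarith
  ext
  · have := (mul_eq_zero.1 e1).resolve_left h0.ne'; linarith
  · have := (mul_eq_zero.1 e2).resolve_left h0.ne'; linarith

lemma XData.hexTuple {P : Set (ℝ × ℝ)} (h : Good P) {p : Fin 6 → ℝ × ℝ} (hp : ∀ k, p k ∈ P)
    (he : 2 * Real.pi * √3 * hexsum p = 9 * (volume P).toReal) :
    MaxHex P (hq (p 0) (p 3)) (hq (p 1) (p 4)) := by
  have ha := InM_hq (hp 0) (hp 3)
  have hb := InM_hq (hp 1) (hp 4)
  have hc := InM_hq (hp 2) (hp 5)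
  obtain ⟨e1, e2⟩ := (h.hh _ _ _ ha hb hc).2 he
  unfold hexsum at he
  set a := hq (p 0) (p 3)
  set b := hq (p 1) (p 4)
  set c := hq (p 2) (p 5)
  have h4 : 6 * Real.pi * √3 * cr a b = 9 * (volume P).toReal := by
    rw [← he, ← e2, ← e1]; ring
  have hpos : 0 < cr a b := by
    have h1 := h.vol_pos
    have h3 : 0 < 6 * Real.pi * √3 := by have := Real.pi_pos; positivity
    by_contra hcon
    nlinarith
  have hcb : c = b - a := by
    have i1 : cr a b * c.1 = cr a c * b.1 - cr b c * a.1 := by simp only [cr]; ring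
    have i2 : cr a b * c.2 = cr a c * b.2 - cr b c * a.2 := by simp only [cr]; ring
    rw [← e2, ← e1, ← mul_sub] at i1 i2
    ext
    · exact mul_left_cancel₀ hpos.ne' i1
    · exact mul_left_cancel₀ hpos.ne' i2
  exact ⟨ha, hb, hcb ▸ hc, h4⟩

lemma XData.hex {P : Set (ℝ × ℝ)} (h : Good P) {m w t : ℝ} (hX : XData P m w)
    (ht : t ∈ Icc 0 (2 * Real.pi)) : ∃ q r, MaxHex P q r ∧ q.1 = w * Real.cos t ∧
      r.1 = w * Real.cos (t + Real.pi / 3) := by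
  obtain ⟨p, hp, hx, he⟩ := hX.2.2 t ht
  refine ⟨_, _, XData.hexTuple h hp he, ?_, ?_⟩
  · simp only [hq, hx, ang0, ang3, Real.cos_add_pi]; ring
  · simp only [hq, hx, ang1, ang4, Real.cos_add_pi]; ring

lemma XData.abs_le {P : Set (ℝ × ℝ)} {m w : ℝ} (hX : XData P m w) {q : ℝ × ℝ} (hq : InM P q) :
    |q.1| ≤ w := by
  obtain ⟨p, hp, p', hp', h1, _⟩ := hq
  have h2 := hX.2.1 p hp
  have h3 := hX.2.1 p' hp'
  rw [h1, _root_.abs_le]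
  constructor <;> linarith

lemma mid {P : Set (ℝ × ℝ)} (h : Good P) {m w : ℝ} (hX : XData P m w) {a b p q : ℝ × ℝ}
    (hm : MaxHex P a b) (hp : InM P p) (hq : InM P q) (hpa : p.1 = a.1) (hqa : q.1 = a.1)
    (h1 : p.2 < a.2) (h2 : a.2 < q.2) (hw : |a.1| < w) : False := by
  have i1 := hm.support_a h hp
  have i2 := hm.support_a h hq
  have hpos := hm.pos h
  simp only [cr] at i1 i2 hpos
  rw [hpa] at i1
  rw [hqa] at i2
  have hk : 2 * b.1 - a.1 = 0 := by
    have j1 : (a.2 - p.2) * (2 * b.1 - a.1) ≤ 0 := by linarith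
    have j2 : (q.2 - a.2) * (-(2 * b.1 - a.1)) ≤ 0 := by linarith
    have := nonpos_of_mul_nonpos_right j1 (by linarith)
    have := nonpos_of_mul_nonpos_right j2 (by linarith)
    linarith
  obtain ⟨e, _, he, hex, _⟩ := hX.hex h (t := 0) ⟨le_rfl, by have := Real.pi_pos; positivity⟩
  rw [Real.cos_zero, mul_one] at hex
  have i3 := hm.support_a h he.1
  have i4 := hm.support_a h he.1.neg
  simp only [cr, Prod.fst_neg, Prod.snd_neg] at i3 i4
  rw [hex] at i3 i4
  have hb1 : b.1 = a.1 / 2 := by linarith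
  rw [hb1] at i3 i4 hpos
  have k3 : w * (2 * b.2 - a.2) ≤ a.1 * (2 * b.2 - a.2) := by linarith
  have k4 : -w * (2 * b.2 - a.2) ≤ a.1 * (2 * b.2 - a.2) := by linarith
  obtain ⟨l1, l2⟩ := abs_lt.1 hw
  have k5 : 0 < a.1 * (2 * b.2 - a.2) := by linarith
  rcases lt_trichotomy (2 * b.2 - a.2) 0 with hs | hs | hs
  · nlinarith
  · rw [hs] at k5; linarith
  · nlinarith

lemma hexForm_aux {P : Set (ℝ × ℝ)} (h : Good P) {m w : ℝ} (hX : XData P m w) {a b : ℝ × ℝ}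
    (hm : MaxHex P a b) (hw : |a.1| < w) :
    4 * (a.1 ^ 2 - a.1 * b.1 + b.1 ^ 2) = 3 * w ^ 2 := by
  have hw0 := hX.1
  obtain ⟨l1, l2⟩ := abs_lt.1 hw
  have h3 : √3 * √3 = 3 := Real.mul_self_sqrt (by norm_num)
  have d1 : -1 < a.1 / w := by rw [lt_div_iff₀ hw0]; linarith
  have d2 : a.1 / w < 1 := by rw [div_lt_iff₀ hw0]; linarith
  set t := Real.arccos (a.1 / w) with ht
  have hcos : w * Real.cos t = a.1 := by
    rw [ht, Real.cos_arccos d1.le d2.le]; field_simp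
  have ht0 : 0 ≤ t := Real.arccos_nonneg _
  have htpi : t ≤ Real.pi := Real.arccos_le_pi _
  have hsin : Real.sin t ≠ 0 := by
    rw [ht, Real.sin_arccos]
    apply (Real.sqrt_pos.2 _).ne'
    nlinarith
  have hsq := Real.sin_sq_add_cos_sq t
  obtain ⟨q, r, hqr, hq1, hr1⟩ := hX.hex h (t := t) ⟨ht0, by linarith⟩
  obtain ⟨q', r', hqr', hq1', hr1'⟩ := hX.hex h (t := 2 * Real.pi - t) ⟨by linarith, by linarith⟩
  rw [Real.cos_two_pi_sub, hcos] at hq1'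
  rw [cos_third, Real.cos_two_pi_sub, Real.sin_two_pi_sub] at hr1'
  rw [hcos] at hq1
  rw [cos_third] at hr1
  by_cases c1 : a.2 = q.2
  · have : a = q := Prod.ext hq1.symm c1
    subst this
    have := hm.unique h hqr
    subst this
    rw [hr1, ← hcos]
    linear_combination (3 * w ^ 2) * hsq + (w ^ 2 * Real.sin t ^ 2) * h3
  by_cases c2 : a.2 = q'.2
  · have : a = q' := Prod.ext hq1'.symm c2
    subst this
    have := hm.unique h hqr'
    subst this
    rw [hr1', ← hcos]
    linear_combination (3 * w ^ 2) * hsq + (w ^ 2 * Real.sin t ^ 2) * h3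
  by_cases c3 : q.2 = q'.2
  · have : q = q' := Prod.ext (hq1.trans hq1'.symm) c3
    subst this
    have := hqr.unique h hqr'
    rw [← this, hr1] at hr1'
    exfalso
    have h30 : (0 : ℝ) < √3 := by positivity
    have : w * √3 * Real.sin t = 0 := by linarith
    exact (mul_ne_zero (mul_pos hw0 h30).ne' hsin) this
  exfalso
  have hwq : |q.1| < w := by rw [hq1]; exact hw
  have hwq' : |q'.1| < w := by rw [hq1']; exact hw
  have eqq : q.1 = q'.1 := hq1.trans hq1'.symm
  rcases lt_or_gt_of_ne c1 with i1 | i1 <;> rcases lt_or_gt_of_ne c2 with i2 | i2 <;>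
    rcases lt_or_gt_of_ne c3 with i3 | i3
  · exact mid h hX hqr hm.1 hqr'.1 hq1.symm eqq.symm i1 i3 hwq
  · exact mid h hX hqr' hm.1 hqr.1 hq1'.symm eqq i2 i3 hwq'
  · linarith
  · exact mid h hX hm hqr'.1 hqr.1 hq1' hq1 i2 i1 hw
  · exact mid h hX hm hqr.1 hqr'.1 hq1 hq1' i1 i2 hw
  · linarith
  · exact mid h hX hqr' hqr.1 hm.1 eqq hq1'.symm i3 i2 hwq'
  · exact mid h hX hqr hqr'.1 hm.1 eqq.symm hq1.symm i3 i1 hwq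

lemma hexForm {P : Set (ℝ × ℝ)} (h : Good P) {m w : ℝ} (hX : XData P m w) {a b : ℝ × ℝ}
    (hm : MaxHex P a b) : 4 * (a.1 ^ 2 - a.1 * b.1 + b.1 ^ 2) = 3 * w ^ 2 := by
  have ia := hX.abs_le hm.1
  have ib := hX.abs_le hm.2.1
  have ic := hX.abs_le hm.2.2.1
  by_cases ha : |a.1| < w
  · exact hexForm_aux h hX hm ha
  by_cases hb : |b.1| < w
  · have := hexForm_aux h hX hm.rot hb
    simp only [Prod.fst_sub] at this
    linarith
  by_cases hc : |(b - a).1| < w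
  · have := hexForm_aux h hX hm.rot.rot hc
    simp only [Prod.fst_sub] at this
    linarith
  exfalso
  have hw0 := hX.1
  simp only [Prod.fst_sub] at ic hc
  have ea : |a.1| = w := le_antisymm ia (not_lt.1 ha)
  have eb : |b.1| = w := le_antisymm ib (not_lt.1 hb)
  have ec : |b.1 - a.1| = w := le_antisymm ic (not_lt.1 hc)
  rcases (abs_eq hw0.le).1 ea with e1 | e1 <;> rcases (abs_eq hw0.le).1 eb with e2 | e2 <;>
    rcases (abs_eq hw0.le).1 ec with e3 | e3 <;> linarith

lemma MaxHex.map {P : Set (ℝ × ℝ)} {a b : ℝ × ℝ} (hm : MaxHex P a b) (p q r s : ℝ)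
    (hd : 0 < p * s - q * r) : MaxHex (lin p q r s '' P) (lin p q r s a) (lin p q r s b) := by
  obtain ⟨h1, h2, h3, h4⟩ := hm
  refine ⟨InM_lin _ _ _ _ h1, InM_lin _ _ _ _ h2, ?_, ?_⟩
  · have : lin p q r s b - lin p q r s a = lin p q r s (b - a) := by
      ext <;> simp only [lin, Prod.fst_sub, Prod.snd_sub] <;> ring
    rw [this]; exact InM_lin _ _ _ _ h3
  · rw [volume_lin _ _ _ _ _ hd, cr_lin]
    linear_combination (p * s - q * r) * h4

/-! ### The normalized case -/

lemma norm_le_of_hex {P : Set (ℝ × ℝ)} (h : Good P)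
    (hm : MaxHex P ((1, 0) : ℝ × ℝ) (1 / 2, √3 / 2)) {q : ℝ × ℝ} (hq : InM P q) :
    q.1 ^ 2 + q.2 ^ 2 ≤ 1 := by
  have h3 : √3 * √3 = 3 := Real.mul_self_sqrt (by norm_num)
  rcases eq_or_lt_of_le (show 0 ≤ q.1 ^ 2 + q.2 ^ 2 by positivity) with h0 | h0
  · linarith
  have hd : 0 < q.1 * q.1 - q.2 * (-q.2) := by nlinarith
  have hG := h.map q.1 q.2 (-q.2) q.1 hd
  obtain ⟨m, w, hX⟩ := propX hG
  have hf := hexForm hG hX (hm.map q.1 q.2 (-q.2) q.1 hd)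
  have hle := hX.abs_le (InM_lin q.1 q.2 (-q.2) q.1 hq)
  simp only [lin] at hf hle
  have hle2 := (_root_.abs_le.1 hle).2
  have hf2 : q.1 ^ 2 + q.2 ^ 2 = w ^ 2 := by linear_combination hf / 3 - (q.2 ^ 2 / 3) * h3
  have hw := hX.1
  nlinarith

lemma hex_regular {x y z u : ℝ} (h1 : x ^ 2 + y ^ 2 ≤ 1) (h2 : z ^ 2 + u ^ 2 ≤ 1)
    (h3 : (z - x) ^ 2 + (u - y) ^ 2 ≤ 1) (h4 : x * u - y * z = √3 / 2) :
    z = x / 2 - √3 / 2 * y := by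
  have hs : √3 * √3 = 3 := Real.mul_self_sqrt (by norm_num)
  obtain ⟨A, hA⟩ : ∃ A, A = x ^ 2 + y ^ 2 := ⟨_, rfl⟩
  obtain ⟨B, hB⟩ : ∃ B, B = z ^ 2 + u ^ 2 := ⟨_, rfl⟩
  obtain ⟨d, hd⟩ : ∃ d, d = x * z + y * u := ⟨_, rfl⟩
  have e1 : 3 / 4 + d ^ 2 = A * B := by
    have : (x * u - y * z) ^ 2 + d ^ 2 = A * B := by rw [hA, hB, hd]; ring
    rw [← this, h4]; linear_combination -hs / 4
  have e2 : A + B - 1 ≤ 2 * d := by rw [hA, hB, hd]; linarith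
  rw [← hA] at h1
  rw [← hB] at h2
  have hA0 : 0 ≤ A := by rw [hA]; positivity
  have hB0 : 0 ≤ B := by rw [hB]; positivity
  have hAB : 3 / 4 ≤ A * B := by nlinarith [sq_nonneg d]
  have e3 : 1 ≤ A + B := by nlinarith
  have e4 : (A + B - 1) ^ 2 ≤ (2 * d) ^ 2 := pow_le_pow_left₀ (by linarith) e2 2
  have e5 : 2 ≤ A + B := by nlinarith [sq_nonneg (A - B)]
  have eA : A = 1 := by linarith
  have eB : B = 1 := by linarith
  have ed : d = 1 / 2 := by
    rw [eA, eB] at e1 e2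
    nlinarith
  have : z * A = x * d - y * (x * u - y * z) := by rw [hA, hd]; ring
  rw [eA, ed, h4] at this
  linarith

lemma exists_angle_s1 {c d : ℝ} (h : c ^ 2 + d ^ 2 = 1) :
    ∃ t ∈ Icc 0 (2 * Real.pi), Real.cos t = c ∧ Real.sin t = d := by
  have hc1 : -1 ≤ c := by nlinarith [sq_nonneg d]
  have hc2 : c ≤ 1 := by nlinarith [sq_nonneg d]
  have hs : Real.sin (Real.arccos c) = |d| := by
    rw [Real.sin_arccos, show 1 - c ^ 2 = d ^ 2 by linarith, Real.sqrt_sq_eq_abs]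
  have h0 := Real.arccos_nonneg c
  have h1 := Real.arccos_le_pi c
  have hpi := Real.pi_pos
  rcases le_or_gt 0 d with hd | hd
  · exact ⟨Real.arccos c, ⟨h0, by linarith⟩, Real.cos_arccos hc1 hc2, by rw [hs, abs_of_nonneg hd]⟩
  · refine ⟨2 * Real.pi - Real.arccos c, ⟨by linarith, by linarith⟩, ?_, ?_⟩
    · rw [Real.cos_two_pi_sub, Real.cos_arccos hc1 hc2]
    · rw [Real.sin_two_pi_sub, hs, abs_of_neg hd, neg_neg]

lemma diam_chord {P : Set (ℝ × ℝ)} (h : Good P) (hW : ∀ q, InM P q → q.1 ^ 2 + q.2 ^ 2 ≤ 1)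
    {a b : ℝ × ℝ} (hab : MaxHex P a b) (hcr : cr a b = √3 / 2) {m : ℝ} (hX : XData P m 1)
    {c d : ℝ} (hcd : c ^ 2 + d ^ 2 = 1) :
    ∃ p ∈ P, ∃ p' ∈ P, p.1 - p'.1 = 2 * c ∧ p.2 - p'.2 = 2 * d ∧ p.1 = m + c := by
  obtain ⟨t, ht, hc, hd⟩ := exists_angle_s1 hcd
  obtain ⟨p, hp, hx, he⟩ := hX.2.2 t ht
  have hm := XData.hexTuple h hp he
  have e0 := hx 0
  have e3 := hx 3
  have e1 := hx 1
  have e4 := hx 4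
  rw [ang0, hc] at e0
  rw [ang3, Real.cos_add_pi, hc] at e3
  rw [ang1, cos_third, hc, hd] at e1
  rw [ang4, Real.cos_add_pi, cos_third, hc, hd] at e4
  have hcr' := (hm.cr_eq hab).trans hcr
  have n0 := hW _ hm.1
  have n1 := hW _ hm.2.1
  have n2 := hW _ hm.2.2.1
  simp only [cr] at hcr'
  simp only [Prod.fst_sub, Prod.snd_sub] at n2
  have hreg := hex_regular n0 n1 n2 hcr'
  simp only [hq] at hreg
  refine ⟨p 0, hp 0, p 3, hp 3, by rw [e0, e3]; ring, ?_, by rw [e0]; ring⟩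
  rw [e0, e1, e3, e4] at hreg
  have h30 : (0 : ℝ) < √3 := by positivity
  have : √3 * ((p 0).2 - (p 3).2) = √3 * (2 * d) := by linarith
  exact mul_left_cancel₀ h30.ne' this

lemma disc_of_hex {P : Set (ℝ × ℝ)} (h : Good P)
    (hm : MaxHex P ((1, 0) : ℝ × ℝ) (1 / 2, √3 / 2)) :
    ∃ m n : ℝ, P = {p | (p.1 - m) ^ 2 + (p.2 - n) ^ 2 ≤ 1} := by
  have h3 : √3 * √3 = 3 := Real.mul_self_sqrt (by norm_num)
  have hW := fun q hq => norm_le_of_hex h hm (q := q) hq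
  have hcr : cr ((1, 0) : ℝ × ℝ) (1 / 2, √3 / 2) = √3 / 2 := by simp [cr]
  -- first direction
  obtain ⟨m, w, hX⟩ := propX h
  have hw : w = 1 := by
    have := hexForm h hX hm
    have hw0 := hX.1
    simp only at this
    nlinarith
  subst hw
  have hx := fun c d hcd => diam_chord h hW hm hcr hX (c := c) (d := d) hcd
  -- second direction
  have hdet : (0 : ℝ) < 0 * 0 - 1 * (-1) := by norm_num
  have hG := h.map 0 1 (-1) 0 hdet
  have hm2 := hm.map 0 1 (-1) 0 hdet
  obtain ⟨n, w, hX2⟩ := propX hG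
  have hw : w = 1 := by
    have := hexForm hG hX2 hm2
    have hw0 := hX2.1
    simp only [lin] at this
    nlinarith
  subst hw
  have hW2 : ∀ q, InM (lin 0 1 (-1) 0 '' P) q → q.1 ^ 2 + q.2 ^ 2 ≤ 1 := by
    intro q hq
    obtain ⟨q, hq', rfl⟩ := InM_of_lin hq
    have := hW q hq'
    simp only [lin]; linarith
  have hy := fun c d hcd => diam_chord hG hW2 hm2 (by rw [cr_lin, hcr]; ring) hX2 (c := c) (d := d) hcd
  have hdist : ∀ p ∈ P, ∀ p' ∈ P, (p.1 - p'.1) ^ 2 + (p.2 - p'.2) ^ 2 ≤ 4 := by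
    intro p hp p' hp'
    have := hW ((p.1 - p'.1) / 2, (p.2 - p'.2) / 2) ⟨p, hp, p', hp', rfl, rfl⟩
    simp only at this
    linarith
  have hcirc : ∀ c d : ℝ, c ^ 2 + d ^ 2 = 1 → (m + c, n + d) ∈ P := by
    intro c d hcd
    obtain ⟨p, hp, p', hp', e1, e2, e3⟩ := hx c d hcd
    obtain ⟨_, ⟨q, hq, rfl⟩, _, ⟨q', hq', rfl⟩, f1, f2, f3⟩ := hy d (-c) (by linarith)
    simp only [lin] at f1 f2 f3
    have g1 : q.1 - q'.1 = 2 * c := by linarith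
    have g2 : q.2 - q'.2 = 2 * d := by linarith
    have g3 : q.2 = n + d := by linarith
    have d1 := hdist p hp q' hq'
    have d2 := hdist q hq p' hp'
    -- p = q + v, the vectors 2 e + v and 2 e - v are both of norm at most 2
    obtain ⟨v1, hv1⟩ : ∃ v1, v1 = p.1 - q.1 := ⟨_, rfl⟩
    obtain ⟨v2, hv2⟩ : ∃ v2, v2 = p.2 - q.2 := ⟨_, rfl⟩
    have i1 : p.1 - q'.1 = 2 * c + v1 := by linarith
    have i2 : p.2 - q'.2 = 2 * d + v2 := by linarith
    have i3 : q.1 - p'.1 = 2 * c - v1 := by linarith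
    have i4 : q.2 - p'.2 = 2 * d - v2 := by linarith
    rw [i1, i2] at d1
    rw [i3, i4] at d2
    have hv : v1 ^ 2 + v2 ^ 2 ≤ 0 := by nlinarith
    have hv20 : v2 = 0 := by
      have : v2 ^ 2 ≤ 0 := by nlinarith [sq_nonneg v1]
      exact pow_eq_zero_iff two_ne_zero |>.1 (le_antisymm this (sq_nonneg _))
    have : p = (m + c, n + d) := by
      ext
      · exact e3
      · simp only; linarith
    rw [← this]; exact hp
  refine ⟨m, n, ?_⟩
  ext p
  constructor
  · intro hp
    change (p.1 - m) ^ 2 + (p.2 - n) ^ 2 ≤ 1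
    obtain ⟨r, hr⟩ : ∃ r, r = √((p.1 - m) ^ 2 + (p.2 - n) ^ 2) := ⟨_, rfl⟩
    have hr2 : r ^ 2 = (p.1 - m) ^ 2 + (p.2 - n) ^ 2 := by
      rw [hr, Real.sq_sqrt (by positivity)]
    have hr0 : 0 ≤ r := by rw [hr]; positivity
    rcases eq_or_lt_of_le hr0 with h0 | h0
    · rw [← hr2, ← h0]; norm_num
    have hu : (-(p.1 - m) / r) ^ 2 + (-(p.2 - n) / r) ^ 2 = 1 := by
      field_simp; linarith
    have := hdist p hp _ (hcirc _ _ hu)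
    simp only at this
    have e1 : p.1 - (m + -(p.1 - m) / r) = (p.1 - m) * ((r + 1) / r) := by field_simp; ring
    have e2 : p.2 - (n + -(p.2 - n) / r) = (p.2 - n) * ((r + 1) / r) := by field_simp; ring
    rw [e1, e2, mul_pow, mul_pow, ← add_mul, ← hr2] at this
    have e3 : r ^ 2 * ((r + 1) / r) ^ 2 = (r + 1) ^ 2 := by field_simp
    rw [e3] at this
    rw [← hr2]
    have : r ≤ 1 := by nlinarith
    nlinarith
  · intro hp
    change (p.1 - m) ^ 2 + (p.2 - n) ^ 2 ≤ 1 at hp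
    obtain ⟨s, hs⟩ : ∃ s, s = √(1 - (p.1 - m) ^ 2) := ⟨_, rfl⟩
    have hs2 : s ^ 2 = 1 - (p.1 - m) ^ 2 := by
      rw [hs, Real.sq_sqrt]; nlinarith [sq_nonneg (p.2 - n)]
    have hs0 : 0 ≤ s := by rw [hs]; positivity
    have hle : |p.2 - n| ≤ s := abs_le_of_sq_le_sq (by linarith) hs0
    obtain ⟨l1, l2⟩ := _root_.abs_le.1 hle
    have k1 := hcirc (p.1 - m) s (by linarith)
    have k2 := hcirc (p.1 - m) (-s) (by rw [neg_sq]; linarith)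
    rcases eq_or_lt_of_le hs0 with h0 | h0
    · have : p = (m + (p.1 - m), n + s) := by ext <;> simp only <;> linarith
      rw [this]; exact k1
    · have := h.conv k1 k2 (show 0 ≤ (s + (p.2 - n)) / (2 * s) from div_nonneg (by linarith) (by linarith))
        (show 0 ≤ (s - (p.2 - n)) / (2 * s) from div_nonneg (by linarith) (by linarith))
        (by field_simp; ring)
      convert this using 1
      ext
      · simp; field_simp; ring
      · simp; field_simp; ring

lemma toP_good (K : Set (Fin 2 → ℝ)) (hKc : IsCompact K) (hKconv : Convex ℝ K)
    (hKint : (interior K).Nonempty) (heq : dTrans K = Real.pi * Real.sqrt 3 / 8) :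
    Good (toP K) := by
  have hvol : volume (toP K) = volume K :=
    (volume_preserving_finTwoArrow ℝ).symm.measure_preimage_equiv K
  have hV : 0 < (volume K).toReal := by
    apply ENNReal.toReal_pos
    · exact (Measure.measure_pos_of_nonempty_interior _ hKint).ne'
    · exact hKc.measure_lt_top.ne
  have himg : toP K = (fun v : Fin 2 → ℝ => (v 0, v 1)) '' K := by
    ext p
    constructor
    · intro hp
      exact ⟨_, hp, by simp⟩
    · rintro ⟨v, hv, rfl⟩
      change ![v 0, v 1] ∈ K
      have : ![v 0, v 1] = v := by ext i; fin_cases i <;> rfl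
      rw [this]; exact hv
  refine ⟨?_, ?_, ?_, ?_⟩
  · rw [himg]; exact hKc.image (by fun_prop)
  · intro p hp q hq a b ha hb hab
    have := hKconv hp hq ha hb hab
    change ![_, _] ∈ K
    convert this using 1
    ext i; fin_cases i <;> simp
  · have hcont : Continuous fun p : ℝ × ℝ => ![p.1, p.2] := by fun_prop
    obtain ⟨v, hv⟩ := hKint
    refine ⟨(v 0, v 1), ?_⟩
    refine interior_maximal (s := toP K) (t := (fun p : ℝ × ℝ => ![p.1, p.2]) ⁻¹' interior K)
      (fun p hp => ?_) (isOpen_interior.preimage hcont) ?_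
    · exact interior_subset (s := K) hp
    · change ![v 0, v 1] ∈ interior K
      have : ![v 0, v 1] = v := by ext i; fin_cases i <;> rfl
      rw [this]; exact hv
  · rw [hvol]
    apply HH_of_C K _ hV hKconv hKint
    intro A hA hns
    rw [← heq]
    apply csInf_le
    · refine ⟨0, ?_⟩
      rintro d ⟨B, _, _, rfl⟩
      positivity
    · exact ⟨A, hA, hns, rfl⟩

/-- If a convex body `K ⊆ ℝ²` satisfies `d_{2,1}(K) = π√3/8`, then `K` is an ellipse. -/
theorem eq_case_d21 (K : Set (Fin 2 → ℝ))
    (hKc : IsCompact K) (hKconv : Convex ℝ K) (hKint : (interior K).Nonempty)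
    (heq : dTrans K = Real.pi * Real.sqrt 3 / 8) :
    IsEllipse K := by
  have h := toP_good K hKc hKconv hKint heq
  obtain ⟨m0, w0, hX⟩ := propX h
  obtain ⟨a, b, hab, _, _⟩ := hX.hex h (t := 0) ⟨le_rfl, by have := Real.pi_pos; positivity⟩
  have hpos := hab.pos h
  have h3 : √3 * √3 = 3 := Real.mul_self_sqrt (by norm_num)
  have h30 : (0 : ℝ) < √3 := by positivity
  obtain ⟨g1, hg1⟩ : ∃ g, g = (2 * b.1 - a.1) / √3 := ⟨_, rfl⟩
  obtain ⟨g2, hg2⟩ : ∃ g, g = (2 * b.2 - a.2) / √3 := ⟨_, rfl⟩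
  have hb1 : b.1 = (a.1 + √3 * g1) / 2 := by rw [hg1]; field_simp; ring
  have hb2 : b.2 = (a.2 + √3 * g2) / 2 := by rw [hg2]; field_simp; ring
  obtain ⟨D, hD⟩ : ∃ D, D = a.1 * g2 - a.2 * g1 := ⟨_, rfl⟩
  have hD0 : 0 < D := by
    have : cr a b = √3 / 2 * D := by rw [cr, hb1, hb2, hD]; ring
    rw [this] at hpos
    exact pos_of_mul_pos_right hpos (by positivity)
  have hdet : 0 < (g2 / D) * (a.1 / D) - (-g1 / D) * (-a.2 / D) := by
    have : (g2 / D) * (a.1 / D) - (-g1 / D) * (-a.2 / D) = 1 / D := by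
      field_simp; rw [hD]; ring
    rw [this]; positivity
  have hm := hab.map _ _ _ _ hdet
  have ea : lin (g2 / D) (-g1 / D) (-a.2 / D) (a.1 / D) a = (1, 0) := by
    ext
    · simp only [lin]; field_simp; rw [hD]; ring
    · simp only [lin]; field_simp; ring
  have eb : lin (g2 / D) (-g1 / D) (-a.2 / D) (a.1 / D) b = (1 / 2, √3 / 2) := by
    ext
    · simp only [lin, hb1, hb2]; field_simp; rw [hD]; ring
    · simp only [lin, hb1, hb2]; field_simp; rw [hD]; ring
  rw [ea, eb] at hm
  obtain ⟨m, n, hmn⟩ := disc_of_hex (h.map _ _ _ _ hdet) hm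
  have hiff : ∀ p : ℝ × ℝ, p ∈ toP K ↔
      ((g2 / D) * p.1 + (-g1 / D) * p.2 - m) ^ 2 + ((-a.2 / D) * p.1 + (a.1 / D) * p.2 - n) ^ 2 ≤ 1 := by
    intro p
    constructor
    · intro hp
      have : lin (g2 / D) (-g1 / D) (-a.2 / D) (a.1 / D) p ∈
        lin (g2 / D) (-g1 / D) (-a.2 / D) (a.1 / D) '' toP K := ⟨p, hp, rfl⟩
      rw [hmn] at this
      exact this
    · intro hp
      have : lin (g2 / D) (-g1 / D) (-a.2 / D) (a.1 / D) p ∈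
          lin (g2 / D) (-g1 / D) (-a.2 / D) (a.1 / D) '' toP K := by
        rw [hmn]; exact hp
      obtain ⟨p', hp', he⟩ := this
      simp only [lin, Prod.mk.injEq] at he
      obtain ⟨e1, e2⟩ := he
      have hp1 : ∀ p : ℝ × ℝ, a.1 * ((g2 / D) * p.1 + (-g1 / D) * p.2) +
          g1 * ((-a.2 / D) * p.1 + (a.1 / D) * p.2) = p.1 := by
        intro p; field_simp; rw [hD]; ring
      have hp2 : ∀ p : ℝ × ℝ, a.2 * ((g2 / D) * p.1 + (-g1 / D) * p.2) +
          g2 * ((-a.2 / D) * p.1 + (a.1 / D) * p.2) = p.2 := by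
        intro p; field_simp; rw [hD]; ring
      have : p' = p := by
        ext
        · rw [← hp1 p', ← hp1 p, e1, e2]
        · rw [← hp2 p', ← hp2 p, e1, e2]
      rw [← this]; exact hp'
  refine ⟨!![a.1, g1; a.2, g2], ?_, ![a.1 * m + g1 * n, a.2 * m + g2 * n], ?_⟩
  · rw [Matrix.det_fin_two_of]
    have : a.1 * g2 - g1 * a.2 = D := by rw [hD]; ring
    rw [this]; exact hD0.ne'
  · ext k
    have hk : k ∈ K ↔ (k 0, k 1) ∈ toP K := by
      have : ![k 0, k 1] = k := by ext i; fin_cases i <;> rfl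
      change _ ↔ ![k 0, k 1] ∈ K
      rw [this]
    rw [hk, hiff]
    constructor
    · intro hle
      refine ⟨![(g2 / D) * k 0 + (-g1 / D) * k 1 - m, (-a.2 / D) * k 0 + (a.1 / D) * k 1 - n], ?_, ?_⟩
      · change _ ⬝ᵥ _ ≤ (1 : ℝ)
        simp only [dotProduct, Fin.sum_univ_two, Matrix.cons_val_zero, Matrix.cons_val_one]
        simp only at hle
        linarith
      · ext i
        fin_cases i
        · simp [Matrix.mulVec, dotProduct, Fin.sum_univ_two]
          field_simp; rw [hD]; ring
        · simp [Matrix.mulVec, dotProduct, Fin.sum_univ_two]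
          field_simp; rw [hD]; ring
    · rintro ⟨x, hx, rfl⟩
      change x ⬝ᵥ x ≤ 1 at hx
      simp only [dotProduct, Fin.sum_univ_two] at hx
      have e0 : (!![a.1, g1; a.2, g2] *ᵥ x + ![a.1 * m + g1 * n, a.2 * m + g2 * n]) 0 =
          a.1 * (x 0 + m) + g1 * (x 1 + n) := by
        simp [Matrix.mulVec, dotProduct, Fin.sum_univ_two]; ring
      have e1 : (!![a.1, g1; a.2, g2] *ᵥ x + ![a.1 * m + g1 * n, a.2 * m + g2 * n]) 1 =
          a.2 * (x 0 + m) + g2 * (x 1 + n) := by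
        simp [Matrix.mulVec, dotProduct, Fin.sum_univ_two]; ring
      simp only [e0, e1]
      have f0 : (g2 / D) * (a.1 * (x 0 + m) + g1 * (x 1 + n)) +
          (-g1 / D) * (a.2 * (x 0 + m) + g2 * (x 1 + n)) - m = x 0 := by
        field_simp; rw [hD]; ring
      have f1 : (-a.2 / D) * (a.1 * (x 0 + m) + g1 * (x 1 + n)) +
          (a.1 / D) * (a.2 * (x 0 + m) + g2 * (x 1 + n)) - n = x 1 := by
        field_simp; rw [hD]; ring
      rw [f0, f1]; linarith
end
end
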